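/- arXiv:2208.11286 — 2 statements merged into one kernel-verified Lean document; each statement's English description precedes it below -/
import Mathlib

section
/- Let ε ≤ 1/60000 and δ := (3/2) ε log₂(1/ε). Let n be a positive integer, let H ⊆ ℝ^n be a linear subspace of dimension at least (1−δ) n, let K ⊆ H be a symmetric convex set with γ_H(K) ≥ e^{−δn}, and let x_0 ∈ (−1,1)^n. Then there exists a point x ∈ (x_0 + K) ∩ [−1,1]^n such that the number of indices i with x_i ∈ {−1, +1} is at least ε n / 2. -/
section Helpers

open MeasureTheory ProbabilityTheory
open scoped ENNReal Pointwise


lemma bm_compact (A B : Set ℝ) (hA : IsCompact A) (hB : IsCompact B) (hAn : A.Nonempty)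
    (hBn : B.Nonempty) : volume A + volume B ≤ volume (A + B) := by
  obtain ⟨a, haA, ha⟩ := hA.exists_isGreatest hAn
  obtain ⟨b, hbB, hb⟩ := hB.exists_isLeast hBn
  have h1 : volume A = volume ((fun x => x + b) '' A) := by simp
  have h2 : volume B = volume ((fun x => a + x) '' B) := by simp
  have h3 : volume ((fun x => a + x) '' B) = volume ((fun x => a + x) '' B \ {a + b}) := by
    rw [measure_sdiff_null]; simp
  rw [h1, h2, h3, ← measure_union]
  · apply measure_mono
    rintro x (⟨y, hy, rfl⟩ | ⟨⟨y, hy, rfl⟩, -⟩)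
    · exact Set.add_mem_add hy hbB
    · exact Set.add_mem_add haA hy
  · rw [Set.disjoint_left]
    rintro x ⟨y, hy, rfl⟩ ⟨⟨z, hz, hzy⟩, hne⟩
    have := ha hy
    have := hb hz
    simp only [Set.mem_singleton_iff] at hne hzy
    apply hne
    linarith
  · exact ((hB.image (by fun_prop)).measurableSet).diff (measurableSet_singleton _)

lemma bm_half (A B S : Set ℝ) (hA : MeasurableSet A) (hB : MeasurableSet B) (hAn : A.Nonempty)
    (hBn : B.Nonempty) (hS : ∀ a ∈ A, ∀ b ∈ B, (a + b) / 2 ∈ S) :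
    volume A + volume B ≤ 2 * volume S := by
  obtain ⟨a, ha⟩ := hAn
  obtain ⟨b, hb⟩ := hBn
  have hvol : 2 * volume S = volume ((2 : ℝ) • S) := by
    rw [Measure.addHaar_smul]; simp
  have key : ∀ K ⊆ A, IsCompact K → ∀ K' ⊆ B, IsCompact K' →
      volume K + volume K' ≤ 2 * volume S := by
    intro K hK hKc K' hK' hKc'
    rw [hvol]
    calc volume K + volume K' ≤ volume (insert a K) + volume (insert b K') := by
          gcongr <;> apply Set.subset_insert
      _ ≤ volume (insert a K + insert b K') :=
          bm_compact _ _ (hKc.insert a) (hKc'.insert b) (Set.insert_nonempty _ _)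
            (Set.insert_nonempty _ _)
      _ ≤ _ := by
          apply measure_mono
          rintro _ ⟨x, hx, y, hy, rfl⟩
          have hx' : x ∈ A := Set.insert_subset ha hK hx
          have hy' : y ∈ B := Set.insert_subset hb hK' hy
          exact ⟨(x + y) / 2, hS _ hx' _ hy', by simp; ring⟩
  rw [hA.measure_eq_iSup_isCompact, hB.measure_eq_iSup_isCompact]
  apply ENNReal.biSup_add_biSup_le'
  · exact ⟨∅, Set.empty_subset _⟩
  · exact ⟨∅, Set.empty_subset _⟩
  intro K hK K' hK'
  by_cases h : IsCompact K <;> by_cases h' : IsCompact K' <;> simp only [h, h', iSup_pos, iSup_neg, not_false_eq_true]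
  · exact key K hK h K' hK' h'
  · simpa using key K hK h ∅ (Set.empty_subset _) isCompact_empty
  · simpa using key ∅ (Set.empty_subset _) isCompact_empty K' hK' h'
  · simp

lemma pl_unit (f g h : ℝ → ℝ) (hf : Measurable f) (hg : Measurable g) (hh : Measurable h)
    (f0 : ∀ x, 0 ≤ f x) (g0 : ∀ x, 0 ≤ g x) (h0 : ∀ x, 0 ≤ h x)
    (f1 : ∀ x, f x ≤ 1) (g1 : ∀ x, g x ≤ 1)
    (fs : ∀ t < 1, ∃ x, t < f x) (gs : ∀ t < 1, ∃ x, t < g x)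
    (H : ∀ x y, f x * g y ≤ h ((x + y) / 2) ^ 2) :
    (∫⁻ x, ENNReal.ofReal (f x)) + (∫⁻ x, ENNReal.ofReal (g x)) ≤
      2 * ∫⁻ x, ENNReal.ofReal (h x) := by
  rw [lintegral_eq_lintegral_meas_lt _ (ae_of_all _ f0) hf.aemeasurable,
    lintegral_eq_lintegral_meas_lt _ (ae_of_all _ g0) hg.aemeasurable,
    lintegral_eq_lintegral_meas_lt _ (ae_of_all _ h0) hh.aemeasurable]
  have anti : ∀ u : ℝ → ℝ, Measurable fun t : ℝ => volume {a | t < u a} := by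
    intro u
    apply Antitone.measurable
    intro s t hst
    exact measure_mono fun a (ha : t < u a) => lt_of_le_of_lt hst ha
  rw [← lintegral_add_left (anti f), ← lintegral_const_mul _ (anti h)]
  apply setLIntegral_mono ((anti h).const_mul _)
  intro t ht
  have ht : 0 < t := ht
  by_cases h1 : t < 1
  · apply bm_half _ _ _ (measurableSet_lt measurable_const hf)
      (measurableSet_lt measurable_const hg) (fs t h1) (gs t h1)
    intro a ha b hb
    have ha : t < f a := ha
    have hb : t < g b := hb
    have := H a b
    show t < h _
    by_contra hc
    push Not at hc
    have := h0 ((a + b) / 2)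
    nlinarith
  · have e1 : {a | t < f a} = ∅ := by
      ext a; simp; linarith [f1 a]
    have e2 : {a | t < g a} = ∅ := by
      ext a; simp; linarith [g1 a]
    simp [e1, e2]

lemma ennreal_amgm (x y : ℝ≥0∞) : 4 * (x * y) ≤ (x + y) ^ 2 := by
  wlog hxy : x ≤ y generalizing x y
  · have := this y x (le_of_not_ge hxy)
    rwa [mul_comm y x, add_comm y x] at this
  obtain ⟨d, rfl⟩ := exists_add_of_le hxy
  calc 4 * (x * (x + d)) ≤ 4 * (x * (x + d)) + d ^ 2 := le_self_add
    _ = _ := by ring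


lemma pl_bdd (f g h : ℝ → ℝ≥0∞) (hf : Measurable f) (hg : Measurable g) (hh : Measurable h)
    (fb : (⨆ x, f x) ≠ ∞) (gb : (⨆ x, g x) ≠ ∞)
    (H : ∀ x y, f x * g y ≤ h ((x + y) / 2) ^ 2) :
    (∫⁻ x, f x) * (∫⁻ x, g x) ≤ (∫⁻ x, h x) ^ 2 := by
  set a := ⨆ x, f x with ha
  set b := ⨆ x, g x with hb
  have fle : ∀ x, f x ≤ a := fun x => le_iSup f x
  have gle : ∀ x, g x ≤ b := fun x => le_iSup g x
  by_cases a0 : a = 0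
  · have : ∀ x, f x = 0 := fun x => le_antisymm (a0 ▸ fle x) bot_le
    simp [this]
  by_cases b0 : b = 0
  · have : ∀ x, g x = 0 := fun x => le_antisymm (b0 ▸ gle x) bot_le
    simp [this]
  set A := a.toReal with hA
  set B := b.toReal with hB
  have Apos : 0 < A := ENNReal.toReal_pos a0 fb
  have Bpos : 0 < B := ENNReal.toReal_pos b0 gb
  have aA : a = ENNReal.ofReal A := (ENNReal.ofReal_toReal fb).symm
  have bB : b = ENNReal.ofReal B := (ENNReal.ofReal_toReal gb).symm
  set M := Real.sqrt (A * B) with hM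
  have Mpos : 0 < M := Real.sqrt_pos.2 (by positivity)
  have M2 : M ^ 2 = A * B := Real.sq_sqrt (by positivity)
  set F : ℝ → ℝ := fun x => (f x).toReal / A with hF
  set G : ℝ → ℝ := fun x => (g x).toReal / B with hG
  set h' : ℝ → ℝ≥0∞ := fun x => min (h x) (ENNReal.ofReal M) with hh'
  have h'top : ∀ x, h' x ≠ ∞ := fun x => (lt_of_le_of_lt (min_le_right _ _) ENNReal.ofReal_lt_top).ne
  set Hh : ℝ → ℝ := fun x => (h' x).toReal / M with hHh
  have ftop : ∀ x, f x ≠ ∞ := fun x => ne_top_of_le_ne_top fb (fle x)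
  have gtop : ∀ x, g x ≠ ∞ := fun x => ne_top_of_le_ne_top gb (gle x)
  have fr : ∀ x, (f x).toReal ≤ A := fun x => ENNReal.toReal_mono fb (fle x)
  have gr : ∀ x, (g x).toReal ≤ B := fun x => ENNReal.toReal_mono gb (gle x)
  have key := pl_unit F G Hh (hf.ennreal_toReal.div_const _) (hg.ennreal_toReal.div_const _)
    ((hh.min measurable_const).ennreal_toReal.div_const _)
    (fun x => by positivity) (fun x => by positivity) (fun x => by positivity)
    (fun x => by rw [hF]; simp only; rw [div_le_one Apos]; exact fr x)
    (fun x => by rw [hG]; simp only; rw [div_le_one Bpos]; exact gr x)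
    (by
      intro t ht
      have : ENNReal.ofReal (t * A) < ⨆ x, f x := by
        rw [← ha, aA]; apply (ENNReal.ofReal_lt_ofReal_iff Apos).2; nlinarith
      obtain ⟨x, hx⟩ := lt_iSup_iff.1 this
      refine ⟨x, ?_⟩
      rw [hF]; simp only; rw [lt_div_iff₀ Apos]
      by_contra hc
      push Not at hc
      have h2 := ENNReal.ofReal_le_ofReal hc
      rw [ENNReal.ofReal_toReal (ftop x)] at h2
      exact absurd hx (not_lt.2 h2))
    (by
      intro t ht
      have : ENNReal.ofReal (t * B) < ⨆ x, g x := by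
        rw [← hb, bB]; apply (ENNReal.ofReal_lt_ofReal_iff Bpos).2; nlinarith
      obtain ⟨x, hx⟩ := lt_iSup_iff.1 this
      refine ⟨x, ?_⟩
      rw [hG]; simp only; rw [lt_div_iff₀ Bpos]
      by_contra hc
      push Not at hc
      have h2 := ENNReal.ofReal_le_ofReal hc
      rw [ENNReal.ofReal_toReal (gtop x)] at h2
      exact absurd hx (not_lt.2 h2))
    (by
      intro x y
      simp only [hF, hG, hHh]
      rw [div_mul_div_comm, div_pow, M2]
      gcongr
      rw [← ENNReal.toReal_mul, ← ENNReal.toReal_pow]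
      apply ENNReal.toReal_mono
      · exact ENNReal.pow_ne_top (h'top _)
      · simp only [hh']
        rcases le_total (h ((x + y) / 2)) (ENNReal.ofReal M) with hl | hl
        · rw [min_eq_left hl]; exact H x y
        · rw [min_eq_right hl, ← ENNReal.ofReal_pow Mpos.le, M2, ENNReal.ofReal_mul Apos.le]
          rw [← aA, ← bB]
          exact mul_le_mul' (fle x) (gle y))
  have e1 : ∫⁻ x, ENNReal.ofReal (F x) = (∫⁻ x, f x) / a := by
    rw [div_eq_mul_inv, ← lintegral_mul_const _ hf]
    congr 1; ext x
    simp only [hF]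
    rw [ENNReal.ofReal_div_of_pos Apos, ENNReal.ofReal_toReal (ftop x), ← aA, div_eq_mul_inv]
  have e2 : ∫⁻ x, ENNReal.ofReal (G x) = (∫⁻ x, g x) / b := by
    rw [div_eq_mul_inv, ← lintegral_mul_const _ hg]
    congr 1; ext x
    simp only [hG]
    rw [ENNReal.ofReal_div_of_pos Bpos, ENNReal.ofReal_toReal (gtop x), ← bB, div_eq_mul_inv]
  have e3 : ∫⁻ x, ENNReal.ofReal (Hh x) ≤ (∫⁻ x, h x) / ENNReal.ofReal M := by
    rw [div_eq_mul_inv, ← lintegral_mul_const _ hh]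
    apply lintegral_mono
    intro x
    simp only [hHh]
    rw [ENNReal.ofReal_div_of_pos Mpos, ENNReal.ofReal_toReal (h'top x), div_eq_mul_inv]
    gcongr
    exact min_le_left _ _
  rw [e1, e2] at key
  have k2 : (∫⁻ x, f x) / a * ((∫⁻ x, g x) / b) ≤ ((∫⁻ x, h x) / ENNReal.ofReal M) ^ 2 := by
    have := ennreal_amgm ((∫⁻ x, f x) / a) ((∫⁻ x, g x) / b)
    have k3 : ((∫⁻ x, f x) / a + ((∫⁻ x, g x) / b)) ^ 2 ≤
        (2 * ((∫⁻ x, h x) / ENNReal.ofReal M)) ^ 2 := by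
      gcongr
      exact key.trans (by gcongr)
    have k4 := this.trans k3
    rw [mul_pow, show (2 : ℝ≥0∞) ^ 2 = 4 by norm_num] at k4
    exact (ENNReal.mul_le_mul_iff_right (by norm_num) (by norm_num)).1 k4
  have MM : ENNReal.ofReal M ^ 2 = a * b := by
    rw [← ENNReal.ofReal_pow Mpos.le, M2, ENNReal.ofReal_mul Apos.le, ← aA, ← bB]
  have ab0 : a * b ≠ 0 := mul_ne_zero a0 b0
  have abt : a * b ≠ ∞ := ENNReal.mul_ne_top fb gb
  calc (∫⁻ x, f x) * (∫⁻ x, g x)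
      = ((∫⁻ x, f x) / a * a) * ((∫⁻ x, g x) / b * b) := by
        rw [ENNReal.div_mul_cancel a0 fb, ENNReal.div_mul_cancel b0 gb]
    _ = ((∫⁻ x, f x) / a * ((∫⁻ x, g x) / b)) * (a * b) := by ring
    _ ≤ ((∫⁻ x, h x) / ENNReal.ofReal M) ^ 2 * (a * b) := by gcongr
    _ = ((∫⁻ x, h x) / ENNReal.ofReal M * ENNReal.ofReal M) ^ 2 := by rw [← MM]; ring
    _ = (∫⁻ x, h x) ^ 2 := by
        rw [ENNReal.div_mul_cancel (by simpa using Mpos) ENNReal.ofReal_ne_top]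

lemma lintegral_trunc {α : Type*} [MeasurableSpace α] (μ : Measure α) (f : α → ℝ≥0∞)
    (hf : Measurable f) : ∫⁻ x, f x ∂μ = ⨆ k : ℕ, ∫⁻ x, min (f x) k ∂μ := by
  rw [← lintegral_iSup (fun k => hf.min measurable_const)]
  · congr 1; ext x
    rw [← inf_iSup_eq, ENNReal.iSup_natCast, inf_top_eq]
  · intro k l hkl x
    have : (k : ℝ≥0∞) ≤ l := by exact_mod_cast hkl
    exact min_le_min_left _ this

/-- One-dimensional Prekopa-Leindler inequality. -/
lemma pl_one (f g h : ℝ → ℝ≥0∞) (hf : Measurable f) (hg : Measurable g) (hh : Measurable h)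
    (H : ∀ x y, f x * g y ≤ h ((x + y) / 2) ^ 2) :
    (∫⁻ x, f x) * (∫⁻ x, g x) ≤ (∫⁻ x, h x) ^ 2 := by
  rw [lintegral_trunc _ f hf, lintegral_trunc _ g hg, ENNReal.iSup_mul]
  apply iSup_le; intro k
  rw [ENNReal.mul_iSup]
  apply iSup_le; intro l
  apply pl_bdd _ _ _ (hf.min measurable_const) (hg.min measurable_const) hh
  · exact ne_top_of_le_ne_top (ENNReal.natCast_ne_top k) (iSup_le fun x => min_le_right _ _)
  · exact ne_top_of_le_ne_top (ENNReal.natCast_ne_top l) (iSup_le fun x => min_le_right _ _)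
  · intro x y
    exact (mul_le_mul' (min_le_left _ _) (min_le_left _ _)).trans (H x y)


lemma pl_gauss_one (f g h : ℝ → ℝ≥0∞) (hf : Measurable f) (hg : Measurable g) (hh : Measurable h)
    (H : ∀ x y, f x * g y ≤ h ((x + y) / 2) ^ 2 * ENNReal.ofReal (Real.exp ((x - y) ^ 2 / 4))) :
    (∫⁻ x, f x ∂(gaussianReal 0 1)) * (∫⁻ x, g x ∂(gaussianReal 0 1)) ≤
      (∫⁻ x, h x ∂(gaussianReal 0 1)) ^ 2 := by
  rw [gaussianReal_of_var_ne_zero 0 one_ne_zero]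
  have mp := measurable_gaussianPDF 0 1
  rw [lintegral_withDensity_eq_lintegral_mul _ mp hf,
    lintegral_withDensity_eq_lintegral_mul _ mp hg,
    lintegral_withDensity_eq_lintegral_mul _ mp hh]
  apply pl_one _ _ _ (mp.mul hf) (mp.mul hg) (mp.mul hh)
  intro x y
  simp only [Pi.mul_apply]
  have key : gaussianPDF 0 1 x * gaussianPDF 0 1 y * ENNReal.ofReal (Real.exp ((x - y) ^ 2 / 4))
      = gaussianPDF 0 1 ((x + y) / 2) ^ 2 := by
    simp only [gaussianPDF]
    rw [← ENNReal.ofReal_mul (gaussianPDFReal_nonneg _ _ _), ← ENNReal.ofReal_mul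
      (mul_nonneg (gaussianPDFReal_nonneg _ _ _) (gaussianPDFReal_nonneg _ _ _)),
      ← ENNReal.ofReal_pow (gaussianPDFReal_nonneg _ _ _)]
    congr 1
    simp only [gaussianPDFReal_def]
    rw [mul_pow, ← Real.exp_nat_mul]
    have : ∀ c a b d e : ℝ, a + b + d = e →
        c * Real.exp a * (c * Real.exp b) * Real.exp d = c ^ 2 * Real.exp e := by
      intro c a b d e h
      rw [← h, Real.exp_add, Real.exp_add]; ring
    apply this
    push_cast
    ring
  calc gaussianPDF 0 1 x * f x * (gaussianPDF 0 1 y * g y)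
      = gaussianPDF 0 1 x * gaussianPDF 0 1 y * (f x * g y) := by ring
    _ ≤ gaussianPDF 0 1 x * gaussianPDF 0 1 y *
        (h ((x + y) / 2) ^ 2 * ENNReal.ofReal (Real.exp ((x - y) ^ 2 / 4))) := by
        exact mul_le_mul' le_rfl (H x y)
    _ = (gaussianPDF 0 1 x * gaussianPDF 0 1 y * ENNReal.ofReal (Real.exp ((x - y) ^ 2 / 4))) *
        h ((x + y) / 2) ^ 2 := by ring
    _ = _ := by rw [key]; ring

lemma pl_gauss_pi (n : ℕ) : ∀ (f g h : (Fin n → ℝ) → ℝ≥0∞), Measurable f → Measurable g →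
    Measurable h →
    (∀ x y, f x * g y ≤ h (fun i => (x i + y i) / 2) ^ 2 *
      ENNReal.ofReal (Real.exp ((∑ i, (x i - y i) ^ 2) / 4))) →
    (∫⁻ x, f x ∂(Measure.pi fun _ : Fin n => gaussianReal 0 1)) *
      (∫⁻ x, g x ∂(Measure.pi fun _ : Fin n => gaussianReal 0 1)) ≤
      (∫⁻ x, h x ∂(Measure.pi fun _ : Fin n => gaussianReal 0 1)) ^ 2 := by
  induction n with
  | zero =>
    intro f g h hf hg hh H
    have : ∀ u : (Fin 0 → ℝ) → ℝ≥0∞,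
        ∫⁻ x, u x ∂(Measure.pi fun _ : Fin 0 => gaussianReal 0 1) = u default := by
      intro u
      rw [lintegral_unique]
      simp only [measure_univ, mul_one]
      congr 1
      exact Subsingleton.elim _ _
    rw [this, this, this]
    have := H default default
    simpa using this
  | succ n ih =>
    intro f g h hf hg hh H
    set μ := (Measure.pi fun _ : Fin n => gaussianReal 0 1) with hμ
    have mpres := (measurePreserving_piFinSuccAbove (fun _ : Fin (n + 1) => gaussianReal 0 1) 0)
    set e := MeasurableEquiv.piFinSuccAbove (fun _ : Fin (n + 1) => ℝ) 0 with he
    have esymm : ∀ p : ℝ × (Fin n → ℝ), e.symm p = (Fin.cons p.1 p.2 : Fin (n + 1) → ℝ) := by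
      intro p
      have := Fin.insertNth_zero' (n := n) (β := ℝ) p.1 p.2
      rw [← this]
      rfl
    have split : ∀ u : (Fin (n + 1) → ℝ) → ℝ≥0∞, Measurable u →
        ∫⁻ x, u x ∂(Measure.pi fun _ : Fin (n + 1) => gaussianReal 0 1) =
        ∫⁻ a, ∫⁻ z, u (Fin.cons a z) ∂μ ∂(gaussianReal 0 1) := by
      intro u hu
      rw [← mpres.symm.lintegral_comp_emb e.symm.measurableEmbedding]
      rw [lintegral_prod _ (by exact (hu.comp e.symm.measurable).aemeasurable)]
      simp only [esymm]
      rfl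
    have mcons : Measurable fun p : ℝ × (Fin n → ℝ) => (Fin.cons p.1 p.2 : Fin (n + 1) → ℝ) := by
      have := e.symm.measurable
      simpa only [funext esymm] using this
    rw [split f hf, split g hg, split h hh]
    have mint : ∀ u : (Fin (n + 1) → ℝ) → ℝ≥0∞, Measurable u →
        Measurable fun a : ℝ => ∫⁻ z, u (Fin.cons a z) ∂μ := by
      intro u hu
      exact (hu.comp mcons).lintegral_prod_right'
    apply pl_gauss_one _ _ _ (mint f hf) (mint g hg) (mint h hh)
    intro a b
    set s := ENNReal.ofReal (Real.exp ((a - b) ^ 2 / 8)) with hs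
    have s2 : ENNReal.ofReal (Real.exp ((a - b) ^ 2 / 4)) = s ^ 2 := by
      rw [hs, ← ENNReal.ofReal_pow (Real.exp_pos _).le, ← Real.exp_nat_mul]
      congr 2; push_cast; ring
    have mh : Measurable fun z : Fin n → ℝ => h (Fin.cons ((a + b) / 2) z) :=
      hh.comp (mcons.comp (measurable_const.prodMk measurable_id))
    rw [s2, ← mul_pow, ← lintegral_mul_const _ mh]
    apply ih _ _ _ (hf.comp (mcons.comp (measurable_const.prodMk measurable_id)))
      (hg.comp (mcons.comp (measurable_const.prodMk measurable_id))) (mh.mul_const _)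
    intro x y
    refine (H (Fin.cons a x) (Fin.cons b y)).trans_eq ?_
    rw [mul_pow, ← s2, mul_assoc, ← ENNReal.ofReal_mul (Real.exp_pos _).le, ← Real.exp_add]
    congr 2
    · congr 1
      ext i
      refine Fin.cases ?_ (fun j => ?_) i <;> simp
    · rw [Fin.sum_univ_succ]; simp; ring_nf

lemma pl_std (n : ℕ) (f g h : EuclideanSpace ℝ (Fin n) → ℝ≥0∞) (hf : Measurable f)
    (hg : Measurable g) (hh : Measurable h)
    (H : ∀ x y, f x * g y ≤ h ((1 / 2 : ℝ) • (x + y)) ^ 2 *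
      ENNReal.ofReal (Real.exp (‖x - y‖ ^ 2 / 4))) :
    (∫⁻ x, f x ∂(stdGaussian (EuclideanSpace ℝ (Fin n)))) *
      (∫⁻ x, g x ∂(stdGaussian (EuclideanSpace ℝ (Fin n)))) ≤
      (∫⁻ x, h x ∂(stdGaussian (EuclideanSpace ℝ (Fin n)))) ^ 2 := by
  have mt : Measurable (WithLp.toLp 2 : (Fin n → ℝ) → EuclideanSpace ℝ (Fin n)) := by fun_prop
  rw [← map_pi_eq_stdGaussian, lintegral_map hf mt, lintegral_map hg mt, lintegral_map hh mt]
  apply pl_gauss_pi n _ _ _ (hf.comp mt) (hg.comp mt) (hh.comp mt)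
  intro x y
  refine (H _ _).trans_eq ?_
  congr 2
  · congr 1
    ext i
    simp; ring
  · rw [EuclideanSpace.norm_sq_eq]
    simp


lemma charFun_map_clm {V W : Type*} [NormedAddCommGroup V] [InnerProductSpace ℝ V]
    [FiniteDimensional ℝ V] [MeasurableSpace V] [BorelSpace V]
    [NormedAddCommGroup W] [InnerProductSpace ℝ W]
    [FiniteDimensional ℝ W] [MeasurableSpace W] [BorelSpace W]
    (A : V →L[ℝ] W) (t : W) :
    charFun ((stdGaussian V).map A) t =
      Complex.exp (- ‖ContinuousLinearMap.adjoint A t‖ ^ 2 / 2) := by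
  rw [← charFun_stdGaussian, charFun_apply, charFun_apply,
    integral_map A.continuous.aemeasurable (by fun_prop)]
  simp_rw [ContinuousLinearMap.adjoint_inner_right]

lemma map_proj_std {V : Type*} [NormedAddCommGroup V] [InnerProductSpace ℝ V]
    [FiniteDimensional ℝ V] [MeasurableSpace V] [BorelSpace V] (H : Submodule ℝ V) :
    (stdGaussian V).map H.orthogonalProjectionOnto = stdGaussian H := by
  have : IsProbabilityMeasure ((stdGaussian V).map H.orthogonalProjectionOnto) :=
    Measure.isProbabilityMeasure_map (by fun_prop)
  apply Measure.ext_of_charFun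
  ext t
  rw [charFun_map_clm, charFun_stdGaussian, Submodule.adjoint_orthogonalProjectionOnto]
  simp

lemma gauss_proj {n m : ℕ} (H : Submodule ℝ (EuclideanSpace ℝ (Fin n)))
    (b : OrthonormalBasis (Fin m) ℝ H) (S : Set (EuclideanSpace ℝ (Fin n)))
    (hS : MeasurableSet S) :
    stdGaussian (EuclideanSpace ℝ (Fin n)) {y | H.starProjection y ∈ S} =
    (Measure.pi fun _ : Fin m => gaussianReal 0 1)
        {h | (∑ j, h j • ((b j : H) : EuclideanSpace ℝ (Fin n))) ∈ S} := by
  have h1 := map_proj_std H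
  rw [stdGaussian_eq_map_pi_orthonormalBasis b] at h1
  have hS' : MeasurableSet ((fun x : H => (x : EuclideanSpace ℝ (Fin n))) ⁻¹' S) :=
    hS.preimage (by fun_prop)
  have h2 := congrArg (fun μ => μ ((fun x : H => (x : EuclideanSpace ℝ (Fin n))) ⁻¹' S)) h1
  simp only at h2
  rw [Measure.map_apply (by fun_prop) hS', Measure.map_apply (by fun_prop) hS'] at h2
  have e1 : {y | H.starProjection y ∈ S} =
      (H.orthogonalProjectionOnto ⁻¹' ((fun x : H => (x : EuclideanSpace ℝ (Fin n))) ⁻¹' S)) := rfl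
  have e2 : {h : Fin m → ℝ | (∑ j, h j • ((b j : H) : EuclideanSpace ℝ (Fin n))) ∈ S} =
      ((fun x => ∑ i, x i • b i) ⁻¹' ((fun x : H => (x : EuclideanSpace ℝ (Fin n))) ⁻¹' S)) := by
    ext h
    simp only [Set.mem_preimage, Submodule.coe_sum, Submodule.coe_smul]
    rfl
  rw [e1, e2, h2]

lemma split_proj {V : Type*} [NormedAddCommGroup V] [InnerProductSpace ℝ V]
    [FiniteDimensional ℝ V] [MeasurableSpace V] [BorelSpace V] (E H : Submodule ℝ V) (hEH : E ≤ H) :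
    ((stdGaussian V).prod (stdGaussian V)).map
      (fun p => E.starProjection p.1 + (H.starProjection - E.starProjection) p.2) =
    (stdGaussian V).map H.starProjection := by
  have i1 : ∀ A : V →L[ℝ] V, IsProbabilityMeasure ((stdGaussian V).map A) := fun A =>
    Measure.isProbabilityMeasure_map (by fun_prop)
  have := i1
  have i2 : IsProbabilityMeasure (((stdGaussian V).prod (stdGaussian V)).map
      (fun p => E.starProjection p.1 + (H.starProjection - E.starProjection) p.2)) :=
    Measure.isProbabilityMeasure_map (by fun_prop)
  apply Measure.ext_of_charFun
  have e1 : ((stdGaussian V).prod (stdGaussian V)).map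
      (fun p => E.starProjection p.1 + (H.starProjection - E.starProjection) p.2) =
      (((stdGaussian V).map E.starProjection).prod
        ((stdGaussian V).map (H.starProjection - E.starProjection : V →L[ℝ] V))).map
        (fun p => p.1 + p.2) := by
    rw [Measure.map_prod_map _ _ (by fun_prop) (by fun_prop), Measure.map_map (by fun_prop) (by fun_prop)]
    rfl
  rw [e1, charFun_map_add_prod_eq_mul]
  ext t
  rw [Pi.mul_apply, charFun_map_clm, charFun_map_clm, charFun_map_clm, ← Complex.exp_add]
  congr 1
  have sa : ∀ U : Submodule ℝ V, ContinuousLinearMap.adjoint U.starProjection = U.starProjection :=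
    fun U => U.starProjection_isSymmetric.isSelfAdjoint.adjoint_eq
  rw [map_sub, sa, sa]
  have key : ‖H.starProjection t‖ ^ 2 = ‖E.starProjection t‖ ^ 2 +
      ‖(H.starProjection - E.starProjection) t‖ ^ 2 := by
    have hE : E.starProjection t ∈ H := hEH (E.starProjection_apply_mem t)
    have e2 : inner ℝ (E.starProjection t) ((H.starProjection - E.starProjection) t) = 0 := by
      have a1 : inner ℝ (E.starProjection t) (t - E.starProjection t) = 0 := by
        have := E.starProjection_inner_eq_zero t _ (E.starProjection_apply_mem t)
        rwa [real_inner_comm] at this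
      have a2 : inner ℝ (E.starProjection t) (t - H.starProjection t) = 0 := by
        have := H.starProjection_inner_eq_zero t _ hE
        rwa [real_inner_comm] at this
      rw [_root_.sub_apply,
        show H.starProjection t - E.starProjection t =
          (t - E.starProjection t) - (t - H.starProjection t) by abel, inner_sub_right, a1, a2,
        sub_zero]
    have := norm_add_sq_eq_norm_sq_add_norm_sq_of_inner_eq_zero _ _ e2
    simp only [← sq] at this
    rw [← this]
    simp
  have key' : (‖H.starProjection t‖ : ℂ) ^ 2 = (‖E.starProjection t‖ : ℂ) ^ 2 +
      (‖(H.starProjection - E.starProjection) t‖ : ℂ) ^ 2 := by exact_mod_cast key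
  rw [key']
  ring

lemma std_neg {V : Type*} [NormedAddCommGroup V] [InnerProductSpace ℝ V]
    [FiniteDimensional ℝ V] [MeasurableSpace V] [BorelSpace V] :
    (stdGaussian V).map (fun x => -x) = stdGaussian V :=
  stdGaussian_map (LinearIsometryEquiv.neg ℝ (E := V))

lemma section_mono {n : ℕ} (E H : Submodule ℝ (EuclideanSpace ℝ (Fin n))) (hEH : E ≤ H)
    (K : Set (EuclideanSpace ℝ (Fin n))) (hK : IsClosed K) (hconv : Convex ℝ K)
    (hsymm : ∀ x ∈ K, -x ∈ K) :
    stdGaussian (EuclideanSpace ℝ (Fin n)) {y | H.starProjection y ∈ K} ≤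
      stdGaussian (EuclideanSpace ℝ (Fin n)) {y | E.starProjection y ∈ K} := by
  set γ := stdGaussian (EuclideanSpace ℝ (Fin n)) with hγ
  have h1 := split_proj E H hEH
  have h2 := congrArg (fun μ => μ K) h1
  simp only at h2
  have mm : Measurable (fun p : EuclideanSpace ℝ (Fin n) × EuclideanSpace ℝ (Fin n) =>
    E.starProjection p.1 + (H.starProjection - E.starProjection) p.2) := by fun_prop
  rw [Measure.map_apply mm hK.measurableSet,
    Measure.map_apply (by fun_prop) hK.measurableSet] at h2
  change _ = γ {y | H.starProjection y ∈ K} at h2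
  rw [← h2, Measure.prod_apply_symm (hK.measurableSet.preimage mm)]
  have key : ∀ v : EuclideanSpace ℝ (Fin n), γ {y | E.starProjection y + v ∈ K} ≤
      γ {y | E.starProjection y ∈ K} := by
    intro v
    have ms : ∀ v, MeasurableSet {y | E.starProjection y + v ∈ K} := fun v =>
      hK.measurableSet.preimage (by fun_prop)
    have ms0 : MeasurableSet {y | E.starProjection y ∈ K} :=
      hK.measurableSet.preimage (by fun_prop)
    have e : γ {y | E.starProjection y + -v ∈ K} = γ {y | E.starProjection y + v ∈ K} := by
      conv_lhs => rw [hγ, ← std_neg]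
      rw [Measure.map_apply (by fun_prop) (ms _)]
      congr 1
      ext y
      simp only [Set.mem_preimage, Set.mem_ofPred_eq, map_neg]
      constructor
      · intro h; have := hsymm _ h; simpa [add_comm] using this
      · intro h; have := hsymm _ h; simpa [add_comm] using this
    have := pl_std n ({y | E.starProjection y + v ∈ K}.indicator 1)
      ({y | E.starProjection y + -v ∈ K}.indicator 1)
      ({y | E.starProjection y ∈ K}.indicator 1) (measurable_one.indicator (ms _))
      (measurable_one.indicator (ms _)) (measurable_one.indicator ms0)
      (by
        intro x y
        by_cases hx : E.starProjection x + v ∈ K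
        swap
        · simp [hx]
        by_cases hy : E.starProjection y + -v ∈ K
        swap
        · simp [hy]
        have hz : E.starProjection ((1 / 2 : ℝ) • (x + y)) ∈ K := by
          have := hconv hx hy (a := 1 / 2) (b := 1 / 2) (by norm_num) (by norm_num) (by norm_num)
          convert this using 1
          rw [map_smul, map_add]
          module
        rw [Set.indicator_of_mem (by exact hx), Set.indicator_of_mem (by exact hy),
          Set.indicator_of_mem (by exact hz)]
        simp only [Pi.one_apply, mul_one, one_pow, one_mul]
        rw [ENNReal.one_le_ofReal]
        exact Real.one_le_exp (by positivity))
    rw [← hγ, lintegral_indicator_one (ms _), lintegral_indicator_one (ms _),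
      lintegral_indicator_one ms0, e, ← sq] at this
    exact (ENNReal.pow_le_pow_left_iff two_ne_zero).1 this
  calc _ ≤ ∫⁻ _, γ {y | E.starProjection y ∈ K} ∂γ := lintegral_mono fun v => key _
    _ = _ := by simp


lemma exp_aux : Real.exp (95 / 1000) ≤ 11 / 10 := by
  have h : Real.exp (95 / 32000) ≤ 1 / (1 - 95 / 32000) := by
    have := Real.one_sub_le_exp_neg (95 / 32000)
    rw [Real.exp_neg] at this
    rw [le_div_iff₀ (by norm_num)]
    have h2 := Real.exp_pos (95 / 32000)
    calc Real.exp (95 / 32000) * (1 - 95 / 32000)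
        ≤ Real.exp (95 / 32000) * (Real.exp (95 / 32000))⁻¹ := by gcongr
      _ = 1 := mul_inv_cancel₀ h2.ne'
  have e : Real.exp (95 / 1000) = Real.exp (95 / 32000) ^ 32 := by
    rw [← Real.exp_nat_mul]; congr 1; norm_num
  rw [e]
  calc Real.exp (95 / 32000) ^ 32 ≤ (1 / (1 - 95 / 32000)) ^ 32 := by gcongr
    _ ≤ 11 / 10 := by norm_num

lemma gauss_laplace_one :
    ∫ x, Real.exp (-(1 / 20) * x ^ 2) ∂(gaussianReal 0 1) ≤ Real.exp (-(475 / 10000)) := by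
  rw [integral_gaussianReal_eq_integral_smul one_ne_zero]
  have e : ∀ x : ℝ, gaussianPDFReal 0 1 x • Real.exp (-(1 / 20) * x ^ 2) =
      (√(2 * Real.pi))⁻¹ * Real.exp (-(11 / 20) * x ^ 2) := by
    intro x
    simp only [gaussianPDFReal_def, smul_eq_mul]
    rw [mul_assoc, ← Real.exp_add]
    congr 2
    · simp
    · push_cast; ring
  simp_rw [e]
  rw [integral_const_mul, integral_gaussian]
  have hp := Real.pi_pos
  have : (√(2 * Real.pi))⁻¹ * √(Real.pi / (11 / 20)) = √(10 / 11) := by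
    rw [← Real.sqrt_inv, ← Real.sqrt_mul (by positivity)]
    congr 1
    field_simp; norm_num
  rw [this]
  apply Real.sqrt_le_iff.2
  refine ⟨(Real.exp_pos _).le, ?_⟩
  rw [← Real.exp_nat_mul]
  have h := exp_aux
  rw [show ((2 : ℕ) : ℝ) * -(475 / 10000) = -(95 / 1000) by norm_num, Real.exp_neg,
    show (10 / 11 : ℝ) = (11 / 10)⁻¹ by norm_num]
  exact inv_anti₀ (Real.exp_pos _) h

lemma chi_tail (d : ℕ) :
    (Measure.pi fun _ : Fin d => gaussianReal 0 1).real {h | ∑ j, h j ^ 2 ≤ 9 / 10 * d} ≤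
      Real.exp (-(25 / 10000 * d)) := by
  set μ := (Measure.pi fun _ : Fin d => gaussianReal 0 1) with hμ
  set F : (Fin d → ℝ) → ℝ := fun h => ∏ j, Real.exp (-(1 / 20) * h j ^ 2) with hF
  have Feq : ∀ h, F h = Real.exp (-(1 / 20) * ∑ j, h j ^ 2) := by
    intro h; rw [hF]; simp only; rw [← Real.exp_sum, Finset.mul_sum]
  have F0 : ∀ h, 0 ≤ F h := fun h => by rw [Feq]; positivity
  have Fm : Measurable F := by
    rw [show F = _ from funext Feq]; fun_prop
  have Fi : Integrable F μ := by
    apply Integrable.of_bound Fm.aestronglyMeasurable 1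
    refine ae_of_all _ fun h => ?_
    rw [Real.norm_of_nonneg (F0 h), Feq]
    apply Real.exp_le_one_iff.2
    have : 0 ≤ ∑ j, h j ^ 2 := Finset.sum_nonneg fun j _ => sq_nonneg _
    linarith
  have int : ∫ h, F h ∂μ ≤ Real.exp (-(475 / 10000)) ^ d := by
    rw [hF, hμ, integral_fintype_prod_eq_pow (ι := Fin d) (fun x : ℝ => Real.exp (-(1 / 20) * x ^ 2)), Fintype.card_fin]
    exact pow_le_pow_left₀ (integral_nonneg fun x => (Real.exp_pos _).le) gauss_laplace_one d
  have mk := mul_meas_ge_le_integral_of_nonneg (ae_of_all μ F0) Fi (Real.exp (-(1 / 20) * (9 / 10 * d)))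
  have sub : {h : Fin d → ℝ | ∑ j, h j ^ 2 ≤ 9 / 10 * d} ⊆
      {h | Real.exp (-(1 / 20) * (9 / 10 * d)) ≤ F h} := by
    intro h hh
    have hh : ∑ j, h j ^ 2 ≤ 9 / 10 * d := hh
    show _ ≤ F h
    rw [Feq]
    apply Real.exp_le_exp.2
    nlinarith
  have m1 := measureReal_mono (μ := μ) sub
  refine m1.trans ?_
  have := mk.trans int
  rw [← le_div_iff₀' (Real.exp_pos _), ← Real.exp_nat_mul, ← Real.exp_sub] at this
  refine this.trans_eq ?_
  congr 1; ring

lemma proj_tail {n : ℕ} (E : Submodule ℝ (EuclideanSpace ℝ (Fin n))) :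
    (stdGaussian (EuclideanSpace ℝ (Fin n))).real
      {y | ‖E.starProjection y‖ ^ 2 ≤ 9 / 10 * (Module.finrank ℝ E : ℝ)} ≤
      Real.exp (-(25 / 10000 * (Module.finrank ℝ E : ℝ))) := by
  set b := stdOrthonormalBasis ℝ E
  have := gauss_proj E b {z | ‖z‖ ^ 2 ≤ 9 / 10 * (Module.finrank ℝ E : ℝ)}
    (measurableSet_le (by fun_prop) (by fun_prop))
  rw [measureReal_def]
  change stdGaussian (EuclideanSpace ℝ (Fin n)) {y | ‖E.starProjection y‖ ^ 2 ≤ 9 / 10 * (Module.finrank ℝ E : ℝ)} = _ at this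
  rw [this, ← measureReal_def]
  convert chi_tail (Module.finrank ℝ E) using 3
  ext h
  have : ‖∑ j, h j • ((b j : E) : EuclideanSpace ℝ (Fin n))‖ ^ 2 = ∑ j, h j ^ 2 := by
    have e : ∑ j, h j • ((b j : E) : EuclideanSpace ℝ (Fin n)) = ((∑ j, h j • b j : E) : EuclideanSpace ℝ (Fin n)) := by
      simp
    rw [e, Submodule.norm_coe, ← b.sum_sq_norm_inner_right]
    refine Finset.sum_congr rfl fun x _ => ?_
    rw [b.orthonormal.inner_right_fintype h x, Real.norm_eq_abs, sq_abs]
  change ‖∑ j, h j • ((b j : E) : EuclideanSpace ℝ (Fin n))‖ ^ 2 ≤ _ ↔ _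
  rw [this]

lemma gauss_abs : ∫ x, |x| ∂(gaussianReal 0 1) ≤ 8 / 10 := by
  rw [integral_gaussianReal_eq_integral_smul one_ne_zero]
  have e : ∀ x : ℝ, gaussianPDFReal 0 1 x • |x| =
      (√(2 * Real.pi))⁻¹ * (fun z : ℝ => z ^ (1 : ℝ) * Real.exp (-(1 / 2) * z ^ (2 : ℝ))) |x| := by
    intro x
    simp only [gaussianPDFReal_def, smul_eq_mul, Real.rpow_one]
    rw [mul_assoc, mul_comm (Real.exp _) |x|]
    congr 2
    · simp
    · congr 1
      rw [show (2 : ℝ) = ((2 : ℕ) : ℝ) by norm_num, Real.rpow_natCast, sq_abs]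
      push_cast; ring
  rw [integral_congr_ae (ae_of_all _ e)]
  rw [integral_const_mul, integral_comp_abs (f := fun z : ℝ => z ^ (1 : ℝ) * Real.exp (-(1 / 2) * z ^ (2 : ℝ))),
    integral_rpow_mul_exp_neg_mul_rpow (by norm_num) (by norm_num) (by norm_num)]
  norm_num
  have h3 := Real.pi_gt_d2
  have : (5 / 2 : ℝ) ≤ √2 * √Real.pi := by
    rw [← Real.sqrt_mul (by norm_num)]
    apply Real.le_sqrt_of_sq_le
    linarith
  have h2 : 0 < √2 * √Real.pi := by positivity
  rw [← mul_inv_rev]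
  rw [inv_mul_le_iff₀ h2]
  linarith

lemma l1_tail {n : ℕ} (hn : 0 < n) (x₀ : EuclideanSpace ℝ (Fin n))
    (hx₀ : ∀ i, x₀ i ∈ Set.Ioo (-1 : ℝ) 1) :
    (stdGaussian (EuclideanSpace ℝ (Fin n))).real
      {y | 85 / 100 * (n : ℝ) ≤ ∑ i, (|y i| - y i * x₀ i)} ≤ 80 / 85 := by
  set γ := stdGaussian (EuclideanSpace ℝ (Fin n)) with hγ
  have law : ∀ i, MeasurePreserving (fun y : EuclideanSpace ℝ (Fin n) => y i) γ (gaussianReal 0 1) := by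
    intro i
    refine ⟨by fun_prop, ?_⟩
    rw [hγ, ← map_pi_eq_stdGaussian, Measure.map_map (by fun_prop) (by fun_prop)]
    exact (measurePreserving_eval (fun _ : Fin n => gaussianReal 0 1) i).map_eq
  have iid : Integrable (fun x : ℝ => x) (gaussianReal 0 1) :=
    (memLp_id_gaussianReal 1).integrable (by norm_num)
  have i1 : ∀ i, Integrable (fun y : EuclideanSpace ℝ (Fin n) => y i) γ := fun i =>
    (law i).integrable_comp_of_integrable iid
  have i2 : ∀ i, Integrable (fun y : EuclideanSpace ℝ (Fin n) => |y i|) γ := fun i => (i1 i).abs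
  have i3 : ∀ i, Integrable (fun y : EuclideanSpace ℝ (Fin n) => |y i| - y i * x₀ i) γ := fun i =>
    (i2 i).sub ((i1 i).mul_const _)
  have e : ∀ i, ∫ y, (|y i| - y i * x₀ i) ∂γ ≤ 8 / 10 := by
    intro i
    rw [integral_sub (i2 i) ((i1 i).mul_const _), integral_mul_const]
    have a1 : ∫ y, y i ∂γ = 0 := by
      have := integral_map (μ := γ) (φ := fun y : EuclideanSpace ℝ (Fin n) => y i) (f := fun x : ℝ => x)
        (by fun_prop) (by fun_prop)
      rw [← this, (law i).map_eq, integral_id_gaussianReal]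
    have a2 : ∫ y, |y i| ∂γ ≤ 8 / 10 := by
      have := integral_map (μ := γ) (φ := fun y : EuclideanSpace ℝ (Fin n) => y i) (f := fun x : ℝ => |x|)
        (by fun_prop) (by fun_prop)
      rw [← this, (law i).map_eq]
      exact gauss_abs
    rw [a1]; linarith
  have mk := mul_meas_ge_le_integral_of_nonneg (μ := γ) (f := fun y => ∑ i, (|y i| - y i * x₀ i))
    (ae_of_all _ fun y => Finset.sum_nonneg fun i _ => by
      have := hx₀ i
      have h1 : y i * x₀ i ≤ |y i| * |x₀ i| := by rw [← abs_mul]; exact le_abs_self _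
      have h2 : |x₀ i| ≤ 1 := abs_le.2 ⟨this.1.le, this.2.le⟩
      nlinarith [abs_nonneg (y i)])
    (integrable_finsetSum _ fun i _ => i3 i) (85 / 100 * (n : ℝ))
  rw [integral_finsetSum _ fun i _ => i3 i] at mk
  have s : ∑ i : Fin n, ∫ y, (|y i| - y i * x₀ i) ∂γ ≤ 8 / 10 * n := by
    calc _ ≤ ∑ i : Fin n, (8 / 10 : ℝ) := Finset.sum_le_sum fun i _ => e i
      _ = _ := by simp; ring
  have hn' : (0 : ℝ) < n := by exact_mod_cast hn
  have := mk.trans s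
  rw [← le_div_iff₀' (by positivity)] at this
  refine this.trans_eq ?_
  field_simp; norm_num

lemma polar_bound {n : ℕ} (E : Submodule ℝ (EuclideanSpace ℝ (Fin n)))
    (K : Set (EuclideanSpace ℝ (Fin n))) (hK : IsClosed K) (q r : ℝ) :
    (stdGaussian (EuclideanSpace ℝ (Fin n))).real
      {y | E.starProjection y ∈ K ∧ q ≤ ‖E.starProjection y‖ ^ 2} *
    (stdGaussian (EuclideanSpace ℝ (Fin n))).real
      {y | (∀ x ∈ K, x ∈ E → inner ℝ x y ≤ r) ∧ q ≤ ‖E.starProjection y‖ ^ 2} ≤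
    Real.exp (-((q - r) / 2)) := by
  set γ := stdGaussian (EuclideanSpace ℝ (Fin n)) with hγ
  have mq : MeasurableSet {y : EuclideanSpace ℝ (Fin n) | q ≤ ‖E.starProjection y‖ ^ 2} :=
    measurableSet_le (by fun_prop) (by fun_prop)
  have m1 : MeasurableSet {y | E.starProjection y ∈ K ∧ q ≤ ‖E.starProjection y‖ ^ 2} :=
    (hK.measurableSet.preimage (by fun_prop)).inter mq
  have m2 : MeasurableSet {y | (∀ x ∈ K, x ∈ E → inner ℝ x y ≤ r) ∧ q ≤ ‖E.starProjection y‖ ^ 2} := by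
    refine MeasurableSet.inter (IsClosed.measurableSet ?_) mq
    have : {y | ∀ x ∈ K, x ∈ E → inner ℝ x y ≤ r} = ⋂ x ∈ K, ⋂ (_ : x ∈ E), {y | inner ℝ x y ≤ r} := by
      ext y; simp
    change IsClosed {y | ∀ x ∈ K, x ∈ E → inner ℝ x y ≤ r}
    rw [this]
    refine isClosed_biInter fun x _ => isClosed_iInter fun _ => ?_
    exact isClosed_le (by fun_prop) (by fun_prop)
  have := pl_std n ({y | E.starProjection y ∈ K ∧ q ≤ ‖E.starProjection y‖ ^ 2}.indicator 1)
    ({y | (∀ x ∈ K, x ∈ E → inner ℝ x y ≤ r) ∧ q ≤ ‖E.starProjection y‖ ^ 2}.indicator 1)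
    (fun _ => ENNReal.ofReal (Real.exp (-((q - r) / 4)))) (measurable_one.indicator m1)
    (measurable_one.indicator m2) measurable_const
    (by
      intro x y
      by_cases hx : E.starProjection x ∈ K ∧ q ≤ ‖E.starProjection x‖ ^ 2
      swap
      · rw [Set.indicator_of_notMem (by exact hx)]; simp
      by_cases hy : (∀ x ∈ K, x ∈ E → inner ℝ x y ≤ r) ∧ q ≤ ‖E.starProjection y‖ ^ 2
      swap
      · rw [Set.indicator_of_notMem (s := {y | (∀ x ∈ K, x ∈ E → inner ℝ x y ≤ r) ∧ q ≤ ‖E.starProjection y‖ ^ 2}) (by exact hy)]; simp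
      rw [Set.indicator_of_mem (by exact hx), Set.indicator_of_mem (by exact hy)]
      simp only [Pi.one_apply, mul_one]
      rw [← ENNReal.ofReal_pow (Real.exp_pos _).le, ← ENNReal.ofReal_mul (by positivity),
        ← Real.exp_nat_mul, ← Real.exp_add, ENNReal.one_le_ofReal]
      apply Real.one_le_exp
      have a1 : ‖E.starProjection (x - y)‖ ≤ ‖x - y‖ := E.norm_starProjection_apply_le _
      have a2 : ‖E.starProjection (x - y)‖ ^ 2 = ‖E.starProjection x‖ ^ 2 -
          2 * inner ℝ (E.starProjection x) (E.starProjection y) + ‖E.starProjection y‖ ^ 2 := by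
        rw [map_sub]; exact norm_sub_sq_real _ _
      have a3 : inner ℝ (E.starProjection x) (E.starProjection y) ≤ r := by
        have h1 := hy.1 _ hx.1 (E.starProjection_apply_mem x)
        have h2 := E.starProjection_inner_eq_zero y _ (E.starProjection_apply_mem x)
        rw [real_inner_comm, inner_sub_right] at h2
        linarith
      have a4 : ‖E.starProjection (x - y)‖ ^ 2 ≤ ‖x - y‖ ^ 2 := by gcongr
      have := hx.2
      have := hy.2
      push_cast
      linarith)
  rw [← hγ, lintegral_indicator_one m1, lintegral_indicator_one m2, lintegral_const,
    measure_univ, mul_one, ← ENNReal.ofReal_pow (Real.exp_pos _).le, ← Real.exp_nat_mul] at this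
  have h2 := ENNReal.toReal_mono ENNReal.ofReal_ne_top this
  rw [ENNReal.toReal_mul, ENNReal.toReal_ofReal (Real.exp_pos _).le] at h2
  refine h2.trans_eq ?_
  congr 1; push_cast; ring

lemma delta_facts (ε δ : ℝ) (hε0 : 0 < ε) (hε : ε ≤ 1 / 60000)
    (hδ : δ = 3 / 2 * ε * Real.logb 2 (1 / ε)) :
    0 < δ ∧ δ ≤ 4 / 10000 ∧ 22 * ε ≤ δ ∧ ε / 2 * Real.log (1 / ε) + ε ≤ δ := by
  have l2 : 0 < Real.log 2 := Real.log_pos (by norm_num)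
  have l2' : Real.log 2 < 1 := by have := Real.log_two_lt_d9; linarith
  have l2'' : 1 / 2 < Real.log 2 := by have := Real.log_two_gt_d9; linarith
  set t := 1 / ε with ht
  have ht0 : 0 < t := by positivity
  have ht6 : 60000 ≤ t := by
    rw [ht, le_div_iff₀ hε0]; linarith
  have hεt : ε = 1 / t := by rw [ht]; simp
  have a1 : Real.log t / t ≤ Real.log 60000 / 60000 := by
    have e3 := Real.exp_one_lt_d9
    exact Real.log_div_self_antitoneOn (Set.mem_Ici.2 (by linarith)) (Set.mem_Ici.2 (by linarith)) ht6
  have a2 : Real.log 60000 ≤ 16 * Real.log 2 := by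
    have := Real.log_le_log (x := 60000) (y := 2 ^ 16) (by norm_num) (by norm_num)
    rw [Real.log_pow] at this; exact_mod_cast this
  have a3 : 15 * Real.log 2 ≤ Real.log t := by
    have := Real.log_le_log (x := 2 ^ 15) (y := t) (by norm_num) (by linarith)
    rw [Real.log_pow] at this; exact_mod_cast this
  have hd : δ * Real.log 2 = 3 / 2 * (ε * Real.log t) := by
    rw [hδ, Real.logb]; field_simp
  have b1 : ε * Real.log t ≤ 16 * Real.log 2 / 60000 := by
    rw [hεt, one_div_mul_eq_div]; linarith
  have b2 : 22 * ε * Real.log 2 ≤ δ * Real.log 2 := by rw [hd]; nlinarith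
  have b3 : 22 * ε ≤ δ := le_of_mul_le_mul_right b2 l2
  have dpos : 0 < δ := by linarith
  refine ⟨dpos, ?_, b3, ?_⟩
  · refine le_of_mul_le_mul_right (?_ : δ * Real.log 2 ≤ 4 / 10000 * Real.log 2) l2
    rw [hd]; linarith
  · have : 3 / 2 * (ε * Real.log t) ≤ δ := by
      rw [← hd]; nlinarith
    have : ε ≤ ε * Real.log t := by nlinarith
    linarith

lemma count_bound (ε δ : ℝ) (hε0 : 0 < ε) (n : ℕ)
    (h : ε / 2 * Real.log (1 / ε) + ε ≤ δ) (hε1 : ε ≤ 1) :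
    ((Finset.univ.filter fun I : Finset (Fin n) => ((I.card : ℕ) : ℝ) < ε * n / 2).card : ℝ) ≤
      Real.exp (δ * n) := by
  set F := Finset.univ.filter fun I : Finset (Fin n) => ((I.card : ℕ) : ℝ) < ε * n / 2
  have s : ∑ I : Finset (Fin n), ε ^ I.card = (1 + ε) ^ n := by
    have := Fintype.sum_pow_mul_eq_add_pow (Fin n) ε (1 : ℝ)
    simp only [one_pow, mul_one, Fintype.card_fin] at this
    rw [this, add_comm]
  have lo : ∀ I ∈ F, Real.exp (-(ε * n / 2 * Real.log (1 / ε))) ≤ ε ^ I.card := by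
    intro I hI
    have hI : (I.card : ℝ) < ε * n / 2 := (Finset.mem_filter.1 hI).2
    have : ε ^ I.card = Real.exp (-(I.card * Real.log (1 / ε))) := by
      rw [one_div, Real.log_inv, mul_neg, neg_neg, Real.exp_nat_mul, Real.exp_log hε0]
    rw [this]
    apply Real.exp_le_exp.2
    have : 0 ≤ Real.log (1 / ε) := Real.log_nonneg (by rw [le_div_iff₀ hε0]; linarith)
    nlinarith
  have s2 : (F.card : ℝ) * Real.exp (-(ε * n / 2 * Real.log (1 / ε))) ≤ (1 + ε) ^ n := by
    rw [← s, ← nsmul_eq_mul]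
    refine (Finset.card_nsmul_le_sum F _ _ lo).trans ?_
    exact Finset.sum_le_sum_of_subset_of_nonneg (Finset.subset_univ _) fun _ _ _ => by positivity
  have s3 : (1 + ε) ^ n ≤ Real.exp (ε * n) := by
    rw [mul_comm, Real.exp_nat_mul]
    have := Real.add_one_le_exp ε
    gcongr; linarith
  rw [Real.exp_neg, ← div_eq_mul_inv, div_le_iff₀ (Real.exp_pos _)] at s2
  refine s2.trans ((mul_le_mul_of_nonneg_right s3 (Real.exp_pos _).le).trans ?_)
  rw [← Real.exp_add]
  apply Real.exp_le_exp.2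
  have : (0 : ℝ) ≤ n := Nat.cast_nonneg n
  nlinarith

lemma exp_five : (100 : ℝ) ≤ Real.exp 5 := by
  have h := Real.exp_one_gt_d9
  have : Real.exp 5 = Real.exp 1 ^ 5 := by rw [← Real.exp_nat_mul]; norm_num
  rw [this]
  calc (100 : ℝ) ≤ 2.7 ^ 5 := by norm_num
    _ ≤ _ := by gcongr; linarith

lemma bad_bound {n : ℕ} (hn : 2500 ≤ (n : ℝ)) (δ : ℝ) (hδ : δ ≤ 4 / 10000)
    (E : Submodule ℝ (EuclideanSpace ℝ (Fin n)))
    (hd : 999 / 1000 * (n : ℝ) ≤ Module.finrank ℝ E)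
    (K : Set (EuclideanSpace ℝ (Fin n))) (hK : IsClosed K)
    (hm : Real.exp (-(δ * n)) ≤
      (stdGaussian (EuclideanSpace ℝ (Fin n))).real {y | E.starProjection y ∈ K}) :
    (stdGaussian (EuclideanSpace ℝ (Fin n))).real
      {y | ∀ x ∈ K, x ∈ E → inner ℝ x y ≤ 86 / 100 * (n : ℝ)} ≤
      3 * Real.exp (-(24 / 10000 * n)) := by
  set γ := stdGaussian (EuclideanSpace ℝ (Fin n)) with hγ
  set d : ℝ := (Module.finrank ℝ E : ℝ) with hdd
  have pt := proj_tail E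
  have pb := polar_bound E K hK (9 / 10 * d) (86 / 100 * n)
  rw [← hγ, ← hdd] at pt
  rw [← hγ] at pb
  set T := {y : EuclideanSpace ℝ (Fin n) | ‖E.starProjection y‖ ^ 2 ≤ 9 / 10 * d}
  set L := {y | E.starProjection y ∈ K ∧ 9 / 10 * d ≤ ‖E.starProjection y‖ ^ 2}
  set A := {y | (∀ x ∈ K, x ∈ E → inner ℝ x y ≤ 86 / 100 * (n : ℝ)) ∧ 9 / 10 * d ≤ ‖E.starProjection y‖ ^ 2}
  have u1 : γ.real {y | E.starProjection y ∈ K} ≤ γ.real L + γ.real T := by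
    refine (measureReal_mono ?_).trans (measureReal_union_le L T)
    intro y hy
    rcases le_total (9 / 10 * d) (‖E.starProjection y‖ ^ 2) with h | h
    · exact Or.inl ⟨hy, h⟩
    · exact Or.inr h
  have u2 : γ.real {y | ∀ x ∈ K, x ∈ E → inner ℝ x y ≤ 86 / 100 * (n : ℝ)} ≤ γ.real A + γ.real T := by
    refine (measureReal_mono ?_).trans (measureReal_union_le A T)
    intro y hy
    rcases le_total (9 / 10 * d) (‖E.starProjection y‖ ^ 2) with h | h
    · exact Or.inl ⟨hy, h⟩
    · exact Or.inr h
  have t1 : γ.real T ≤ Real.exp (-(24 / 10000 * n)) := by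
    refine pt.trans (Real.exp_le_exp.2 ?_); linarith
  have t2 : Real.exp (-(24 / 10000 * n)) ≤ Real.exp (-(δ * n)) / 2 := by
    have : Real.exp (-(24 / 10000 * n)) * Real.exp 5 ≤ Real.exp (-(δ * n)) := by
      rw [← Real.exp_add]; apply Real.exp_le_exp.2; nlinarith
    have := exp_five
    have := Real.exp_pos (-(24 / 10000 * (n : ℝ)))
    nlinarith
  have l1 : Real.exp (-(δ * n)) / 2 ≤ γ.real L := by linarith
  have p1 : Real.exp (-(δ * n)) / 2 * γ.real A ≤ Real.exp (-((9 / 10 * d - 86 / 100 * n) / 2)) :=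
    (mul_le_mul_of_nonneg_right l1 measureReal_nonneg).trans pb
  have p2 : Real.exp (-((9 / 10 * d - 86 / 100 * n) / 2)) ≤
      Real.exp (-(δ * n)) / 2 * (2 * Real.exp (-(24 / 10000 * n))) := by
    have e : Real.exp (-(δ * n)) / 2 * (2 * Real.exp (-(24 / 10000 * n))) =
        Real.exp (-(δ * n)) * Real.exp (-(24 / 10000 * n)) := by ring
    rw [e, ← Real.exp_add]
    apply Real.exp_le_exp.2; nlinarith
  have p3 := le_of_mul_le_mul_left (p1.trans p2) (by positivity)
  linarith

lemma scaled_closure {V : Type*} [NormedAddCommGroup V] [NormedSpace ℝ V] [FiniteDimensional ℝ V]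
    (K : Set V) (hconv : Convex ℝ K) (hsymm : ∀ x ∈ K, -x ∈ K) (h0 : (0 : V) ∈ K)
    (c : ℝ) (hc0 : 0 ≤ c) (hc1 : c < 1) (x : V) (hx : x ∈ closure K) : c • x ∈ K := by
  set W := Submodule.span ℝ K with hW
  set K' : Set W := {w | (w : V) ∈ K} with hK'
  have conv' : Convex ℝ K' := hconv.linear_preimage W.subtype
  have z' : (0 : W) ∈ K' := h0
  have sp : Submodule.span ℝ K' = ⊤ := Submodule.span_span_coe_preimage
  have asp : affineSpan ℝ K' = ⊤ := by
    rw [AffineSubspace.affineSpan_eq_top_iff_vectorSpan_eq_top_of_nonempty ℝ W W ⟨0, z'⟩,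
      vectorSpan_eq_span_vsub_set_right ℝ z']
    simpa using sp
  have ne : (interior K').Nonempty := conv'.interior_nonempty_iff_affineSpan_eq_top.2 asp
  obtain ⟨w, hw⟩ := ne
  have negint : -w ∈ interior K' := by
    have e : (Homeomorph.neg W) ⁻¹' K' = K' := by
      ext u
      constructor
      · intro h; have := hsymm _ h; simpa [hK'] using this
      · intro h; have := hsymm _ h; simpa [hK'] using this
    have h1 : w ∈ interior ((Homeomorph.neg W) ⁻¹' K') := by rw [e]; exact hw
    rw [← Homeomorph.preimage_interior] at h1
    exact h1
  have zint : (0 : W) ∈ interior K' := by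
    have := conv'.interior hw negint (a := 1 / 2) (b := 1 / 2) (by norm_num) (by norm_num) (by norm_num)
    simpa using this
  have hxW : x ∈ W := by
    have : closure K ⊆ (W : Set V) :=
      closure_minimal Submodule.subset_span (Submodule.closed_of_finiteDimensional W)
    exact this hx
  have hcl : (⟨x, hxW⟩ : W) ∈ closure K' := by
    rw [closure_subtype]
    have : ((↑) '' K' : Set V) = K := by
      ext u
      constructor
      · rintro ⟨v, hv, rfl⟩; exact hv
      · intro hu; exact ⟨⟨u, Submodule.subset_span hu⟩, hu, rfl⟩
    rw [this]; exact hx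
  have := conv'.combo_interior_closure_mem_interior zint hcl (a := 1 - c) (b := c)
    (by linarith) hc0 (by ring)
  have h2 := interior_subset this
  simpa [hK'] using h2

lemma opt_point {n : ℕ} (K : Set (EuclideanSpace ℝ (Fin n))) (hK : IsClosed K)
    (hconv : Convex ℝ K) (h0 : (0 : EuclideanSpace ℝ (Fin n)) ∈ K)
    (x₀ g : EuclideanSpace ℝ (Fin n)) (hx₀ : ∀ i, x₀ i ∈ Set.Ioo (-1 : ℝ) 1)
    (hg : ∑ i, (|g i| - g i * x₀ i) < 85 / 100 * (n : ℝ)) :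
    ∃ z ∈ K, (∀ i, x₀ i + 85 / 86 * z i ∈ Set.Icc (-1 : ℝ) 1) ∧
      ∀ y ∈ K, (∀ i, (x₀ i + 85 / 86 * z i = 1 ∨ x₀ i + 85 / 86 * z i = -1) → y i = 0) →
        inner ℝ y g ≤ 86 / 100 * (n : ℝ) := by
  set D := {z | z ∈ K ∧ ∀ i, x₀ i + 85 / 86 * z i ∈ Set.Icc (-1 : ℝ) 1} with hD
  have Dc : IsClosed D := by
    refine hK.inter ?_
    have : {z : EuclideanSpace ℝ (Fin n) | ∀ i, x₀ i + 85 / 86 * z i ∈ Set.Icc (-1 : ℝ) 1} =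
      ⋂ i, (fun z : EuclideanSpace ℝ (Fin n) => x₀ i + 85 / 86 * z i) ⁻¹' Set.Icc (-1 : ℝ) 1 := by
      ext z; simp
    change IsClosed {z : EuclideanSpace ℝ (Fin n) | ∀ i, x₀ i + 85 / 86 * z i ∈ Set.Icc (-1 : ℝ) 1}
    rw [this]
    exact isClosed_iInter fun i => isClosed_Icc.preimage (by fun_prop)
  have Db : Bornology.IsBounded D := by
    rw [isBounded_iff_forall_norm_le]
    refine ⟨√(∑ i : Fin n, 3 ^ 2), fun z hz => ?_⟩
    rw [EuclideanSpace.norm_eq]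
    apply Real.sqrt_le_sqrt
    refine Finset.sum_le_sum fun i _ => ?_
    have h1 := hz.2 i
    have h2 := hx₀ i
    have : |z i| ≤ 3 := abs_le.2 ⟨by linarith [h1.1, h2.2], by linarith [h1.2, h2.1]⟩
    rw [Real.norm_eq_abs]
    gcongr
  have Dk : IsCompact D := Metric.isCompact_of_isClosed_isBounded Dc Db
  have D0 : (0 : EuclideanSpace ℝ (Fin n)) ∈ D := by
    refine ⟨h0, fun i => ?_⟩
    have := hx₀ i
    simp [this.1.le, this.2.le]
  obtain ⟨z, hz, hmax⟩ := Dk.exists_isMaxOn ⟨0, D0⟩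
    (f := fun z : EuclideanSpace ℝ (Fin n) => inner ℝ z g) (by fun_prop)
  refine ⟨z, hz.1, hz.2, fun y hy hyt => ?_⟩
  have zb : 85 / 86 * inner ℝ z g < 85 / 100 * (n : ℝ) := by
    refine lt_of_le_of_lt ?_ hg
    rw [PiLp.inner_apply, Finset.mul_sum]
    refine Finset.sum_le_sum fun i _ => ?_
    have h1 := hz.2 i
    have h2 : g i * (x₀ i + 85 / 86 * z i) ≤ |g i| * |x₀ i + 85 / 86 * z i| := by
      rw [← abs_mul]; exact le_abs_self _
    have h3 : |x₀ i + 85 / 86 * z i| ≤ 1 := abs_le.2 h1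
    have h4 := abs_nonneg (g i)
    have h5 : inner ℝ (z i) (g i) = g i * z i := rfl
    rw [h5]
    nlinarith
  by_contra! hc
  have hlt : inner ℝ z g < inner ℝ y g := by linarith
  have ev : ∀ᶠ s : ℝ in nhdsWithin 0 (Set.Ioi 0), ∀ i,
      x₀ i + 85 / 86 * (z i + s * (y i - z i)) ∈ Set.Icc (-1 : ℝ) 1 := by
    rw [Filter.eventually_all]
    intro i
    have lt1 : ∀ᶠ s : ℝ in nhdsWithin 0 (Set.Ioi 0), s ∈ Set.Ioo (0 : ℝ) 1 :=
      Ioo_mem_nhdsGT one_pos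
    have hxi := hx₀ i
    by_cases ht : x₀ i + 85 / 86 * z i = 1 ∨ x₀ i + 85 / 86 * z i = -1
    · rw [hyt i ht]
      filter_upwards [lt1] with s hs
      rcases ht with ht | ht
      · have e : x₀ i + 85 / 86 * (z i + s * (0 - z i)) = x₀ i + (1 - s) * (1 - x₀ i) := by
          linear_combination (1 - s) * ht
        rw [e]
        constructor <;> nlinarith [hs.1, hs.2, hxi.1, hxi.2]
      · have e : x₀ i + 85 / 86 * (z i + s * (0 - z i)) = x₀ i + (1 - s) * (-1 - x₀ i) := by
          linear_combination (1 - s) * ht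
        rw [e]
        constructor <;> nlinarith [hs.1, hs.2, hxi.1, hxi.2]
    · push Not at ht
      have h1 := hz.2 i
      have cont : Continuous fun s : ℝ => x₀ i + 85 / 86 * (z i + s * (y i - z i)) := by fun_prop
      have hin : (fun s : ℝ => x₀ i + 85 / 86 * (z i + s * (y i - z i))) 0 ∈ Set.Ioo (-1 : ℝ) 1 := by
        simp only [zero_mul, add_zero]
        exact ⟨lt_of_le_of_ne h1.1 (Ne.symm ht.2), lt_of_le_of_ne h1.2 ht.1⟩
      have := cont.continuousAt.eventually (isOpen_Ioo.mem_nhds hin)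
      filter_upwards [nhdsWithin_le_nhds this] with s hs
      exact Set.Ioo_subset_Icc_self hs
  have lt1 : ∀ᶠ s : ℝ in nhdsWithin 0 (Set.Ioi 0), s ∈ Set.Ioo (0 : ℝ) 1 :=
    Ioo_mem_nhdsGT one_pos
  obtain ⟨s, hs, hs1⟩ := (ev.and lt1).exists
  have mem : z + s • (y - z) ∈ D := by
    refine ⟨?_, fun i => ?_⟩
    · exact hconv.add_smul_sub_mem hz.1 hy ⟨hs1.1.le, hs1.2.le⟩
    · simpa using hs i
  have := hmax mem
  have this : inner ℝ (z + s • (y - z)) g ≤ inner ℝ z g := this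
  rw [inner_add_left, real_inner_smul_left, inner_sub_left] at this
  nlinarith [hs1.1]

lemma finrank_restrict {n : ℕ} (H : Submodule ℝ (EuclideanSpace ℝ (Fin n))) (I : Finset (Fin n)) :
    ∃ E : Submodule ℝ (EuclideanSpace ℝ (Fin n)), E ≤ H ∧
      (∀ x, x ∈ E ↔ x ∈ H ∧ ∀ i ∈ I, x i = 0) ∧
      Module.finrank ℝ H ≤ Module.finrank ℝ E + I.card := by
  set f : EuclideanSpace ℝ (Fin n) →ₗ[ℝ] (I → ℝ) :=
    LinearMap.pi fun i => (EuclideanSpace.proj (i : Fin n) : EuclideanSpace ℝ (Fin n) →L[ℝ] ℝ).toLinearMap with hf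
  refine ⟨H ⊓ LinearMap.ker f, inf_le_left, fun x => ?_, ?_⟩
  · simp [hf, Submodule.mem_inf, LinearMap.mem_ker, funext_iff]
  · have h1 := Submodule.finrank_sup_add_finrank_inf_eq H (LinearMap.ker f)
    have h2 := Submodule.finrank_le (H ⊔ LinearMap.ker f)
    have h3 := f.finrank_range_add_finrank_ker
    have h4 := Submodule.finrank_le (LinearMap.range f)
    have h5 : Module.finrank ℝ (I → ℝ) = I.card := by simp
    omega

lemma gauss_unit : gaussianReal 0 1 (Set.Icc (-1 : ℝ) 1) ≤ ENNReal.ofReal (8 / 10) := by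
  rw [gaussianReal_apply 0 one_ne_zero]
  have hp : ∀ x : ℝ, gaussianPDF 0 1 x ≤ ENNReal.ofReal (4 / 10) := by
    intro x
    rw [gaussianPDF]
    apply ENNReal.ofReal_le_ofReal
    simp only [gaussianPDFReal_def]
    have h1 : Real.exp (-(x - 0) ^ 2 / (2 * ((1 : NNReal) : ℝ))) ≤ 1 := by
      apply Real.exp_le_one_iff.2
      push_cast
      nlinarith [sq_nonneg (x - 0)]
    have h2 : (√(2 * Real.pi * ((1 : NNReal) : ℝ)))⁻¹ ≤ 4 / 10 := by
      rw [inv_le_comm₀ (by positivity) (by norm_num)]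
      apply Real.le_sqrt_of_sq_le
      have := Real.pi_gt_d2
      push_cast
      norm_num
      linarith
    calc _ ≤ (4 / 10 : ℝ) * 1 := by gcongr
      _ = _ := by norm_num
  calc _ ≤ ∫⁻ _ in Set.Icc (-1 : ℝ) 1, ENNReal.ofReal (4 / 10) := lintegral_mono fun x => hp x
    _ = ENNReal.ofReal (8 / 10) := by
      rw [setLIntegral_const, Real.volume_Icc, ← ENNReal.ofReal_mul (by norm_num)]
      norm_num

lemma cube_bound (n : ℕ) :
    (stdGaussian (EuclideanSpace ℝ (Fin n))).real
      {y | ∀ i, y i ∈ Set.Icc (-1 : ℝ) 1} ≤ (8 / 10) ^ n := by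
  have ms : MeasurableSet {y : EuclideanSpace ℝ (Fin n) | ∀ i, y i ∈ Set.Icc (-1 : ℝ) 1} := by
    have : {z : EuclideanSpace ℝ (Fin n) | ∀ i, z i ∈ Set.Icc (-1 : ℝ) 1} =
      ⋂ i, (fun z : EuclideanSpace ℝ (Fin n) => z i) ⁻¹' Set.Icc (-1 : ℝ) 1 := by
      ext z; simp
    rw [this]
    exact MeasurableSet.iInter fun i => measurableSet_Icc.preimage (by fun_prop)
  rw [measureReal_def, ← map_pi_eq_stdGaussian, Measure.map_apply (by fun_prop) ms]
  have : (WithLp.toLp 2) ⁻¹' {y : EuclideanSpace ℝ (Fin n) | ∀ i, y i ∈ Set.Icc (-1 : ℝ) 1} =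
      Set.univ.pi fun _ : Fin n => Set.Icc (-1 : ℝ) 1 := by
    ext h; simp only [Set.mem_univ_pi]; rfl
  rw [this, Measure.pi_pi, Finset.prod_const, Finset.card_univ, Fintype.card_fin]
  refine ENNReal.toReal_le_of_le_ofReal (by positivity) ?_
  rw [ENNReal.ofReal_pow (by norm_num)]
  gcongr
  exact gauss_unit

lemma case_small {n : ℕ} (hn : 0 < n) (δ : ℝ) (hδ0 : 0 < δ) (hδ : δ ≤ 4 / 10000)
    (K : Set (EuclideanSpace ℝ (Fin n)))
    (hsymm : ∀ x ∈ K, -x ∈ K) (hKconv : Convex ℝ K) (h0 : (0 : EuclideanSpace ℝ (Fin n)) ∈ K)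
    (H : Submodule ℝ (EuclideanSpace ℝ (Fin n))) (hH : H = ⊤)
    (b : OrthonormalBasis (Fin (Module.finrank ℝ H)) ℝ H)
    (hγ : Real.exp (-(δ * n)) ≤
      ((Measure.pi fun _ : Fin (Module.finrank ℝ H) => gaussianReal 0 1)
        {h | (∑ j, h j • ((b j : H) : EuclideanSpace ℝ (Fin n))) ∈ K}).toReal)
    (x₀ : EuclideanSpace ℝ (Fin n)) (hx₀ : ∀ i, x₀ i ∈ Set.Ioo (-1 : ℝ) 1) :
    ∃ x : EuclideanSpace ℝ (Fin n),
      x - x₀ ∈ K ∧ (∀ i, x i ∈ Set.Icc (-1 : ℝ) 1) ∧ ∃ i, x i = 1 ∨ x i = -1 := by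
  by_contra! hcon
  have key : ∀ y ∈ K, ∀ i, |x₀ i + y i| < 1 := by
    intro y hy
    by_contra! hbad
    obtain ⟨i0, hi0⟩ := hbad
    set f : ℝ → ℝ := fun s => ‖fun i => x₀ i + s * y i‖ with hf
    have fc : Continuous f := by
      have : Continuous fun s : ℝ => fun i => x₀ i + s * y i := by fun_prop
      exact this.norm
    have f0 : f 0 ≤ 1 := by
      refine (pi_norm_le_iff_of_nonneg zero_le_one).2 fun i => ?_
      have := hx₀ i
      simp only [zero_mul, add_zero, Real.norm_eq_abs]
      exact abs_le.2 ⟨this.1.le, this.2.le⟩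
    have f1 : 1 ≤ f 1 := by
      have h := norm_le_pi_norm (fun i => x₀ i + 1 * y i) i0
      simp only [one_mul, Real.norm_eq_abs] at h
      simp only [hf, one_mul]
      exact hi0.trans h
    obtain ⟨s, hs, hs1⟩ := intermediate_value_Icc zero_le_one fc.continuousOn ⟨f0, f1⟩
    have hle : ∀ i, |x₀ i + s * y i| ≤ 1 := fun i => by
      rw [← hs1]; exact norm_le_pi_norm (fun i => x₀ i + s * y i) i
    refine absurd (hcon (x₀ + s • y) ?_ ?_) ?_
    · have := hKconv h0 hy (a := 1 - s) (b := s) (by linarith [hs.2]) hs.1 (by ring)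
      simpa using this
    · intro i
      have := abs_le.1 (hle i)
      simpa using this
    · intro hne
      have : f s < 1 := by
        refine (pi_norm_lt_iff one_pos).2 fun i => ?_
        have h1 := hne i
        simp only [PiLp.add_apply, PiLp.smul_apply, smul_eq_mul] at h1
        refine lt_of_le_of_ne (hle i) fun h => ?_
        rcases (abs_eq zero_le_one).1 h with h | h
        · exact h1.1 h
        · exact h1.2 h
      linarith
  set C := {y : EuclideanSpace ℝ (Fin n) | ∀ i, y i ∈ Set.Icc (-1 : ℝ) 1} with hC
  have sub : K ⊆ C := by
    intro y hy i
    have h1 := abs_lt.1 (key y hy i)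
    have h2 := abs_lt.1 (key (-y) (hsymm y hy) i)
    simp only [PiLp.neg_apply] at h2
    exact ⟨by linarith [h1.1, h2.2], by linarith [h1.2, h2.1]⟩
  have ms : MeasurableSet C := by
    have : C = ⋂ i, (fun z : EuclideanSpace ℝ (Fin n) => z i) ⁻¹' Set.Icc (-1 : ℝ) 1 := by
      ext z; simp [hC]
    rw [this]
    exact MeasurableSet.iInter fun i => measurableSet_Icc.preimage (by fun_prop)
  have gp := gauss_proj H b C ms
  have e : {y : EuclideanSpace ℝ (Fin n) | H.starProjection y ∈ C} = C := by
    subst hH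
    ext y
    have : (⊤ : Submodule ℝ (EuclideanSpace ℝ (Fin n))).starProjection y = y :=
      Submodule.starProjection_eq_self_iff.2 Submodule.mem_top
    change (⊤ : Submodule ℝ (EuclideanSpace ℝ (Fin n))).starProjection y ∈ C ↔ _
    rw [this]
  rw [e] at gp
  have h1 : ((Measure.pi fun _ : Fin (Module.finrank ℝ H) => gaussianReal 0 1)
        {h | (∑ j, h j • ((b j : H) : EuclideanSpace ℝ (Fin n))) ∈ K}).toReal ≤ (8 / 10) ^ n := by
    refine le_trans ?_ (cube_bound n)
    rw [measureReal_def, gp]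
    exact ENNReal.toReal_mono (measure_ne_top _ _) (measure_mono fun h hh => sub hh)
  have h2 : ((8 : ℝ) / 10) ^ n < Real.exp (-(δ * n)) := by
    rw [show -(δ * n) = n * (-δ) by ring, Real.exp_nat_mul]
    refine pow_lt_pow_left₀ ?_ (by norm_num) hn.ne'
    have := Real.one_sub_le_exp_neg δ
    linarith
  linarith

lemma case_large {n : ℕ} (ε δ : ℝ) (hε0 : 0 < ε) (hδ : δ ≤ 4 / 10000)
    (hεδ : 22 * ε ≤ δ) (hcount : ε / 2 * Real.log (1 / ε) + ε ≤ δ) (hn1 : 1 ≤ δ * n)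
    (K : Set (EuclideanSpace ℝ (Fin n)))
    (hsymm : ∀ x ∈ K, -x ∈ K) (hKconv : Convex ℝ K) (h0 : (0 : EuclideanSpace ℝ (Fin n)) ∈ K)
    (H : Submodule ℝ (EuclideanSpace ℝ (Fin n)))
    (hdim : (1 - δ) * n ≤ (Module.finrank ℝ H : ℝ))
    (hKH : K ⊆ (H : Set (EuclideanSpace ℝ (Fin n))))
    (b : OrthonormalBasis (Fin (Module.finrank ℝ H)) ℝ H)
    (hγ : Real.exp (-(δ * n)) ≤
      ((Measure.pi fun _ : Fin (Module.finrank ℝ H) => gaussianReal 0 1)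
        {h | (∑ j, h j • ((b j : H) : EuclideanSpace ℝ (Fin n))) ∈ K}).toReal)
    (x₀ : EuclideanSpace ℝ (Fin n)) (hx₀ : ∀ i, x₀ i ∈ Set.Ioo (-1 : ℝ) 1) :
    ∃ x : EuclideanSpace ℝ (Fin n),
      x - x₀ ∈ K ∧ (∀ i, x i ∈ Set.Icc (-1 : ℝ) 1) ∧
      ε * n / 2 ≤ ({i : Fin n | x i = 1 ∨ x i = -1}.ncard : ℝ) := by
  classical
  set γ := stdGaussian (EuclideanSpace ℝ (Fin n)) with hγdef
  have hn : 2500 ≤ (n : ℝ) := by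
    by_contra! h
    have : (0 : ℝ) ≤ n := Nat.cast_nonneg n
    nlinarith
  have hn0 : 0 < n := by
    have : (0 : ℝ) < n := by linarith
    exact_mod_cast this
  set Kb := closure K with hKb
  have Kc : IsClosed Kb := isClosed_closure
  have Kconv : Convex ℝ Kb := hKconv.closure
  have Ksymm : ∀ x ∈ Kb, -x ∈ Kb := fun x hx =>
    map_mem_closure continuous_neg hx fun y hy => hsymm y hy
  have K0 : (0 : EuclideanSpace ℝ (Fin n)) ∈ Kb := subset_closure h0
  have KbH : Kb ⊆ (H : Set (EuclideanSpace ℝ (Fin n))) :=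
    closure_minimal hKH (Submodule.closed_of_finiteDimensional H)
  have mH : Real.exp (-(δ * n)) ≤ γ.real {y | H.starProjection y ∈ Kb} := by
    refine hγ.trans ?_
    rw [measureReal_def, hγdef, gauss_proj H b Kb Kc.measurableSet]
    exact ENNReal.toReal_mono (measure_ne_top _ _) (measure_mono fun h hh => subset_closure hh)
  choose E hEH hEmem hEdim using fun I : Finset (Fin n) => finrank_restrict H I
  set F := Finset.univ.filter fun I : Finset (Fin n) => ((I.card : ℕ) : ℝ) < ε * n / 2 with hF
  set A : Finset (Fin n) → Set (EuclideanSpace ℝ (Fin n)) := fun I =>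
    {y | ∀ x ∈ Kb, x ∈ E I → inner ℝ x y ≤ 86 / 100 * (n : ℝ)} with hA
  have bA : ∀ I ∈ F, γ.real (A I) ≤ 3 * Real.exp (-(24 / 10000 * n)) := by
    intro I hI
    have hI : (I.card : ℝ) < ε * n / 2 := (Finset.mem_filter.1 hI).2
    refine bad_bound hn δ hδ (E I) ?_ Kb Kc ?_
    · have h1 : (Module.finrank ℝ H : ℝ) ≤ Module.finrank ℝ (E I) + I.card := by
        exact_mod_cast hEdim I
      nlinarith
    · refine mH.trans ?_
      exact ENNReal.toReal_mono (measure_ne_top _ _) (section_mono (E I) H (hEH I) Kb Kc Kconv Ksymm)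
  have cF := count_bound ε δ hε0 n hcount (by linarith)
  rw [← hF] at cF
  have bU : γ.real (⋃ I ∈ F, A I) ≤ 3 / 100 := by
    refine (measureReal_biUnion_finset_le F A).trans ((Finset.sum_le_sum bA).trans ?_)
    rw [Finset.sum_const, nsmul_eq_mul]
    have h1 : Real.exp (δ * n) * Real.exp (-(24 / 10000 * n)) * Real.exp 5 ≤ 1 := by
      rw [← Real.exp_add, ← Real.exp_add]
      apply Real.exp_le_one_iff.2
      nlinarith
    have h2 := exp_five
    have h3 := Real.exp_pos (-(24 / 10000 * (n : ℝ)))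
    have h4 := Real.exp_pos (δ * (n : ℝ))
    have h5 : Real.exp (δ * n) * Real.exp (-(24 / 10000 * n)) ≤ 1 / 100 := by
      have := mul_pos h4 h3
      nlinarith
    have h6 : (F.card : ℝ) * Real.exp (-(24 / 10000 * n)) ≤ Real.exp (δ * n) * Real.exp (-(24 / 10000 * n)) := by
      gcongr
    linarith
  have l1 := l1_tail hn0 x₀ hx₀
  rw [← hγdef] at l1
  obtain ⟨g, hg1, hg2⟩ : ∃ g, g ∉ (⋃ I ∈ F, A I) ∧
      g ∉ {y : EuclideanSpace ℝ (Fin n) | 85 / 100 * (n : ℝ) ≤ ∑ i, (|y i| - y i * x₀ i)} := by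
    by_contra! h
    have huniv : (⋃ I ∈ F, A I) ∪ {y : EuclideanSpace ℝ (Fin n) |
        85 / 100 * (n : ℝ) ≤ ∑ i, (|y i| - y i * x₀ i)} = Set.univ := by
      refine Set.eq_univ_of_forall fun g => ?_
      by_cases hg : g ∈ (⋃ I ∈ F, A I)
      · exact Or.inl hg
      · exact Or.inr (h g hg)
    have h1 := measureReal_union_le (μ := γ) (⋃ I ∈ F, A I) {y : EuclideanSpace ℝ (Fin n) |
        85 / 100 * (n : ℝ) ≤ ∑ i, (|y i| - y i * x₀ i)}
    rw [huniv, probReal_univ] at h1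
    linarith
  have hg2 : ∑ i, (|g i| - g i * x₀ i) < 85 / 100 * (n : ℝ) := not_le.1 hg2
  obtain ⟨z, hz, hzb, hzo⟩ := opt_point Kb Kc Kconv K0 x₀ g hx₀ hg2
  have hxi : ∀ i, (x₀ + (85 / 86 : ℝ) • z) i = x₀ i + 85 / 86 * z i := fun i => by simp
  refine ⟨x₀ + (85 / 86 : ℝ) • z, ?_, fun i => ?_, ?_⟩
  · rw [add_sub_cancel_left]
    exact scaled_closure K hKconv hsymm h0 _ (by norm_num) (by norm_num) z hz
  · rw [hxi]; exact hzb i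
  · by_contra! hlt
    set I := Finset.univ.filter fun i : Fin n =>
      (x₀ + (85 / 86 : ℝ) • z) i = 1 ∨ (x₀ + (85 / 86 : ℝ) • z) i = -1 with hI
    have hIs : {i : Fin n | (x₀ + (85 / 86 : ℝ) • z) i = 1 ∨ (x₀ + (85 / 86 : ℝ) • z) i = -1} = (I : Set (Fin n)) := by
      ext i
      rw [Finset.mem_coe, hI, Finset.mem_filter]
      exact ⟨fun h => ⟨Finset.mem_univ _, h⟩, fun h => h.2⟩
    rw [hIs, Set.ncard_coe_finset] at hlt
    apply hg1
    have hIF : I ∈ F := Finset.mem_filter.2 ⟨Finset.mem_univ _, hlt⟩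
    refine Set.mem_biUnion (show I ∈ (F : Set _) from hIF) ?_
    intro y hy hyE
    refine hzo y hy fun i hi => ?_
    refine ((hEmem I y).1 hyE).2 i ?_
    rw [← hxi] at hi
    exact Finset.mem_filter.2 ⟨Finset.mem_univ _, hi⟩

end Helpers

open MeasureTheory ProbabilityTheory


theorem rothvoss_partial_coloring
    (ε δ : ℝ) (hε0 : 0 < ε) (hε : ε ≤ 1 / 60000)
    (hδ : δ = 3 / 2 * ε * Real.logb 2 (1 / ε))
    (n : ℕ) (hn : 0 < n)
    (H : Submodule ℝ (EuclideanSpace ℝ (Fin n)))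
    (hdim : (1 - δ) * n ≤ (Module.finrank ℝ H : ℝ))
    (K : Set (EuclideanSpace ℝ (Fin n)))
    (hKH : K ⊆ (H : Set (EuclideanSpace ℝ (Fin n))))
    (hKsymm : K = -K) (hKconv : Convex ℝ K)
    (b : OrthonormalBasis (Fin (Module.finrank ℝ H)) ℝ H)
    (hγ : Real.exp (-(δ * n)) ≤
      ((Measure.pi fun _ : Fin (Module.finrank ℝ H) => gaussianReal 0 1)
        {h | (∑ j, h j • ((b j : H) : EuclideanSpace ℝ (Fin n))) ∈ K}).toReal)
    (x₀ : EuclideanSpace ℝ (Fin n)) (hx₀ : ∀ i, x₀ i ∈ Set.Ioo (-1 : ℝ) 1) :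
    ∃ x : EuclideanSpace ℝ (Fin n),
      x - x₀ ∈ K ∧ (∀ i, x i ∈ Set.Icc (-1 : ℝ) 1) ∧
      ε * n / 2 ≤ ({i : Fin n | x i = 1 ∨ x i = -1}.ncard : ℝ) := by
  obtain ⟨d0, d1, d2, d3⟩ := delta_facts ε δ hε0 hε hδ
  have hsymm : ∀ x ∈ K, -x ∈ K := fun x hx => by
    rw [hKsymm] at hx; exact hx
  have hne : K.Nonempty := by
    by_contra! h
    rw [h] at hγ
    have := Real.exp_pos (-(δ * n))
    simp at hγ
    linarith
  have h0 : (0 : EuclideanSpace ℝ (Fin n)) ∈ K := by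
    obtain ⟨x, hx⟩ := hne
    have := hKconv hx (hsymm x hx) (a := 1 / 2) (b := 1 / 2) (by norm_num) (by norm_num) (by norm_num)
    simpa using this
  rcases le_or_gt 1 (δ * n) with hbig | hsmall
  · exact case_large ε δ hε0 d1 d2 d3 hbig K hsymm hKconv h0 H hdim hKH b hγ x₀ hx₀
  · have hH : H = ⊤ := by
      apply Submodule.eq_top_of_finrank_eq
      have h1 : Module.finrank ℝ H ≤ Module.finrank ℝ (EuclideanSpace ℝ (Fin n)) := Submodule.finrank_le H
      rw [finrank_euclideanSpace_fin] at h1 ⊢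
      have h2 : (n : ℝ) < (Module.finrank ℝ H : ℝ) + 1 := by linarith
      have h3 : n < Module.finrank ℝ H + 1 := by exact_mod_cast h2
      omega
    obtain ⟨x, hx1, hx2, i, hi⟩ := case_small hn δ d0 d1 K hsymm hKconv h0 H hH b hγ x₀ hx₀
    refine ⟨x, hx1, hx2, ?_⟩
    have h1 : 1 ≤ {i : Fin n | x i = 1 ∨ x i = -1}.ncard :=
      (Set.ncard_pos (Set.toFinite _)).2 ⟨i, hi⟩
    have h2 : (1 : ℝ) ≤ ({i : Fin n | x i = 1 ∨ x i = -1}.ncard : ℝ) := by exact_mod_cast h1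
    have hn' : (0 : ℝ) ≤ n := Nat.cast_nonneg n
    nlinarith
end

section
/- There exists a universal constant C > 0 such that the following holds for all positive integers n and d ≥ 2. Given symmetric matrices A_1, ..., A_n ∈ ℝ^{d×d}, let X = ∑_{i=1}^n g_i A_i where g_1, ..., g_n are i.i.d. standard Gaussian random variables. Then 𝔼[‖X‖_op] ≤ C · ((log d)^{1/4} · σ(X) + (log d)^{1/2} · √(v(X) · σ(X))). -/
open MeasureTheory ProbabilityTheory

/-- Operator norm (largest singular value) of a real matrix, as the norm of the
induced linear map between Euclidean spaces. -/
noncomputable def opNorm {m n : Type*} [Fintype m] [Fintype n] [DecidableEq n]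
    (M : Matrix m n ℝ) : ℝ :=
  ‖LinearMap.toContinuousLinearMap (Matrix.toEuclideanLin M)‖

/-- Squared Frobenius norm of a real matrix. -/
noncomputable def frobNormSq {m n : Type*} [Fintype m] [Fintype n]
    (M : Matrix m n ℝ) : ℝ := ∑ i, ∑ j, (M i j) ^ 2

/-- Product of `n` standard Gaussian measures on `ℝ`. -/
noncomputable def gaussianPi (n : ℕ) : Measure (Fin n → ℝ) :=
  Measure.pi fun _ => gaussianReal 0 1

/-- `σ(X)` for `X = ∑ g i • A i`: square root of the operator norm of `∑ A i ^ 2`. -/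
noncomputable def sigmaX {n d : ℕ} (A : Fin n → Matrix (Fin d) (Fin d) ℝ) : ℝ :=
  Real.sqrt (opNorm (∑ i, A i * A i))

/-- Covariance matrix `Cov(X) = ∑ vec(A i) vec(A i)ᵀ`, indexed by pairs of entries. -/
noncomputable def covX {n d : ℕ} (A : Fin n → Matrix (Fin d) (Fin d) ℝ) :
    Matrix (Fin d × Fin d) (Fin d × Fin d) ℝ :=
  ∑ i, Matrix.of fun p q => A i p.1 p.2 * A i q.1 q.2

/-- `v(X)`: square root of the operator norm of `Cov(X)`. -/
noncomputable def vX {n d : ℕ} (A : Fin n → Matrix (Fin d) (Fin d) ℝ) : ℝ :=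
  Real.sqrt (opNorm (covX A))


namespace TroppAux

lemma integrable_pow_gaussian (m : ℕ) : Integrable (fun x : ℝ => x ^ m) (gaussianReal 0 1) := by
  have h := memLp_id_gaussianReal (μ := 0) (v := 1) (m : NNReal)
  have h2 := h.integrable_norm_pow'
  refine h2.mono' (by fun_prop) ?_
  filter_upwards with x
  simp

lemma integrable_pow_pdf (m : ℕ) :
    Integrable (fun x : ℝ => x ^ m * gaussianPDFReal 0 1 x) volume := by
  have h := integrable_pow_gaussian m
  rw [gaussianReal_of_var_ne_zero _ one_ne_zero,
    integrable_withDensity_iff_integrable_smul' (measurable_gaussianPDF _ _)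
      (by filter_upwards with x using gaussianPDF_lt_top)] at h
  refine h.congr ?_
  filter_upwards with x
  simp [toReal_gaussianPDF, mul_comm]

lemma hasDerivAt_pdf (x : ℝ) :
    HasDerivAt (gaussianPDFReal 0 1) (-(x * gaussianPDFReal 0 1 x)) x := by
  rw [gaussianPDFReal_def]
  have h1 : HasDerivAt (fun x : ℝ => -(x - 0) ^ 2 / (2 * ((1 : NNReal) : ℝ))) (-x) x := by
    refine ((((hasDerivAt_id x).sub_const 0).pow 2).neg.div_const
      (2 * ((1 : NNReal) : ℝ))).congr_deriv ?_
    simp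
    ring
  refine ((h1.exp).const_mul (√(2 * Real.pi * ((1 : NNReal) : ℝ)))⁻¹).congr_deriv ?_
  ring

lemma gaussian_moment (m : ℕ) :
    ∫ x, x ^ (m + 1) ∂(gaussianReal 0 1) = m * ∫ x, x ^ (m - 1) ∂(gaussianReal 0 1) := by
  rw [integral_gaussianReal_eq_integral_smul one_ne_zero,
    integral_gaussianReal_eq_integral_smul one_ne_zero]
  have h := integral_mul_deriv_eq_deriv_mul_of_integrable (A := ℝ)
    (u := fun x : ℝ => x ^ m) (u' := fun x => m * x ^ (m - 1))
    (v := gaussianPDFReal 0 1) (v' := fun x => -(x * gaussianPDFReal 0 1 x))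
    (fun x _ => hasDerivAt_pow m x) (fun x _ => hasDerivAt_pdf x)
    (by
      refine (integrable_pow_pdf (m + 1)).neg.congr ?_
      filter_upwards with x
      simp [pow_succ]; ring)
    (by
      refine ((integrable_pow_pdf (m - 1)).const_mul (m : ℝ)).congr ?_
      filter_upwards with x
      simp; ring)
    (integrable_pow_pdf m)
  rw [← integral_const_mul]
  have h1 : ∫ x, gaussianPDFReal 0 1 x • x ^ (m + 1)
      = - ∫ x, x ^ m * -(x * gaussianPDFReal 0 1 x) := by
    rw [← integral_neg]
    congr 1
    funext x
    simp [pow_succ]; ring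
  rw [h1, h, neg_neg]
  congr 1
  funext x
  simp; ring

variable {n : ℕ}

instance : IsProbabilityMeasure (gaussianPi n) := by
  unfold gaussianPi; infer_instance

lemma eval_monomial' (s : Fin n →₀ ℕ) (a : ℝ) (g : Fin n → ℝ) :
    MvPolynomial.eval g (MvPolynomial.monomial s a) = a * ∏ i, g i ^ s i := by
  rw [MvPolynomial.eval_monomial, Finsupp.prod_fintype _ _ (by simp)]

lemma integrable_poly (q : MvPolynomial (Fin n) ℝ) :
    Integrable (fun g => MvPolynomial.eval g q) (gaussianPi n) := by
  induction q using MvPolynomial.induction_on' with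
  | monomial s a =>
    simp only [eval_monomial']
    refine Integrable.const_mul ?_ a
    exact Integrable.fintype_prod (f := fun i (x : ℝ) => x ^ s i)
      (fun i => integrable_pow_gaussian (s i))
  | add p q hp hq =>
    simp only [map_add]
    exact hp.add hq

/-- Gaussian expectation of polynomials. -/
noncomputable def EE (n : ℕ) : MvPolynomial (Fin n) ℝ →ₗ[ℝ] ℝ where
  toFun q := ∫ g, MvPolynomial.eval g q ∂(gaussianPi n)
  map_add' p q := by
    simp only [map_add]
    exact integral_add (integrable_poly p) (integrable_poly q)
  map_smul' c q := by
    simp only [MvPolynomial.smul_eval, RingHom.id_apply, smul_eq_mul]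
    exact integral_const_mul _ _

lemma EE_apply (q : MvPolynomial (Fin n) ℝ) :
    EE n q = ∫ g, MvPolynomial.eval g q ∂(gaussianPi n) := rfl

lemma EE_mono {p q : MvPolynomial (Fin n) ℝ}
    (h : ∀ g, MvPolynomial.eval g p ≤ MvPolynomial.eval g q) : EE n p ≤ EE n q :=
  integral_mono (integrable_poly p) (integrable_poly q) h

lemma EE_monomial (s : Fin n →₀ ℕ) (a : ℝ) :
    EE n (MvPolynomial.monomial s a) = a * ∏ i, ∫ x, x ^ s i ∂(gaussianReal 0 1) := by
  simp only [EE_apply, eval_monomial', integral_const_mul]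
  congr 1
  exact integral_fintype_prod_eq_prod (fun i (x : ℝ) => x ^ s i)

lemma EE_ibp (i : Fin n) (q : MvPolynomial (Fin n) ℝ) :
    EE n (MvPolynomial.X i * q) = EE n (MvPolynomial.pderiv i q) := by
  induction q using MvPolynomial.induction_on' with
  | monomial s a =>
    rw [MvPolynomial.pderiv_monomial, MvPolynomial.X, MvPolynomial.monomial_mul, EE_monomial,
      EE_monomial, ← Finset.mul_prod_erase _ _ (Finset.mem_univ i),
      ← Finset.mul_prod_erase _ _ (Finset.mem_univ i)]
    have h1 : ∏ j ∈ Finset.univ.erase i, ∫ x, x ^ ((fun₀ | i => 1) + s) j ∂(gaussianReal 0 1)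
        = ∏ j ∈ Finset.univ.erase i, ∫ x, x ^ s j ∂(gaussianReal 0 1) := by
      refine Finset.prod_congr rfl fun j hj => ?_
      have : i ≠ j := (Finset.ne_of_mem_erase hj).symm
      simp [this]
    have h2 : ∏ j ∈ Finset.univ.erase i, ∫ x, x ^ (s - (fun₀ | i => 1)) j ∂(gaussianReal 0 1)
        = ∏ j ∈ Finset.univ.erase i, ∫ x, x ^ s j ∂(gaussianReal 0 1) := by
      refine Finset.prod_congr rfl fun j hj => ?_
      have : i ≠ j := (Finset.ne_of_mem_erase hj).symm
      simp [this]
    rw [h1, h2]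
    have h3 := gaussian_moment (s i)
    simp only [Finsupp.add_apply, Finsupp.single_eq_same, Finsupp.tsub_apply, add_comm 1 (s i)]
    rw [h3]; ring
  | add p q hp hq =>
    rw [mul_add, map_add, map_add, map_add, hp, hq]

variable {d : ℕ}

/-- matrices with polynomial entries -/
abbrev PMat (n d : ℕ) := Matrix (Fin d) (Fin d) (MvPolynomial (Fin n) ℝ)

/-- constant polynomial matrix -/
noncomputable def cM (n : ℕ) (B : Matrix (Fin d) (Fin d) ℝ) : PMat n d := B.map MvPolynomial.C

/-- the random matrix as a polynomial matrix -/
noncomputable def XM (A : Fin n → Matrix (Fin d) (Fin d) ℝ) : PMat n d :=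
  ∑ i, (MvPolynomial.X i : MvPolynomial (Fin n) ℝ) • cM n (A i)

/-- entrywise derivative -/
noncomputable def DM (i : Fin n) (M : PMat n d) : PMat n d := M.map (MvPolynomial.pderiv i)

lemma DM_mul (i : Fin n) (M N : PMat n d) : DM i (M * N) = DM i M * N + M * DM i N := by
  ext a b : 1
  simp only [DM, Matrix.map_apply, Matrix.mul_apply, Matrix.add_apply, map_sum,
    Derivation.leibniz, smul_eq_mul, ← Finset.sum_add_distrib]
  refine Finset.sum_congr rfl fun c _ => ?_
  ring

lemma DM_cM (i : Fin n) (B : Matrix (Fin d) (Fin d) ℝ) : DM i (cM n B) = 0 := by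
  ext a b : 1
  simp [DM, cM]

lemma DM_one (i : Fin n) : DM i (1 : PMat n d) = 0 := by
  ext a b : 1
  simp only [DM, Matrix.map_apply, Matrix.one_apply]
  split_ifs <;> simp

lemma DM_XM (i : Fin n) (A : Fin n → Matrix (Fin d) (Fin d) ℝ) : DM i (XM A) = cM n (A i) := by
  ext a b : 1
  simp only [DM, XM, Matrix.map_apply, Matrix.sum_apply, map_sum, Matrix.smul_apply, cM,
    smul_eq_mul, Derivation.leibniz, MvPolynomial.pderiv_C, MvPolynomial.pderiv_X]
  simp [Pi.single_apply]

lemma deriv_pow_ring {S : Type*} [Ring S] (D : S → S)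
    (hmul : ∀ x y, D (x * y) = D x * y + x * D y) (hone : D 1 = 0) (x a : S) (hx : D x = a)
    (k : ℕ) : D (x ^ k) = ∑ j ∈ Finset.range k, x ^ j * a * x ^ (k - 1 - j) := by
  induction k with
  | zero => simp [hone]
  | succ k ih =>
    rw [pow_succ, hmul, ih, hx, Finset.sum_range_succ, Finset.sum_mul]
    congr 1
    · refine Finset.sum_congr rfl fun j hj => ?_
      rw [mul_assoc _ _ x, ← pow_succ]
      have := Finset.mem_range.1 hj
      congr 2
      omega
    · simp

lemma DM_pow (i : Fin n) (A : Fin n → Matrix (Fin d) (Fin d) ℝ) (k : ℕ) :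
    DM i (XM A ^ k) = ∑ j ∈ Finset.range k, XM A ^ j * cM n (A i) * XM A ^ (k - 1 - j) :=
  deriv_pow_ring (DM i) (DM_mul i) (DM_one i) _ _ (DM_XM i A) k

lemma DM_trace (i : Fin n) (M : PMat n d) :
    MvPolynomial.pderiv i M.trace = (DM i M).trace := by
  simp [Matrix.trace, DM]

lemma EE_ibp_matrix (A : Fin n → Matrix (Fin d) (Fin d) ℝ) (F : PMat n d) :
    EE n (XM A * F).trace = ∑ i, EE n (cM n (A i) * DM i F).trace := by
  have h : (XM A * F).trace = ∑ i, MvPolynomial.X i * (cM n (A i) * F).trace := by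
    rw [XM, Finset.sum_mul, Matrix.trace_sum]
    refine Finset.sum_congr rfl fun i _ => ?_
    rw [Matrix.smul_mul, Matrix.trace_smul, smul_eq_mul]
  rw [h, map_sum]
  refine Finset.sum_congr rfl fun i _ => ?_
  rw [EE_ibp, DM_trace, DM_mul, DM_cM, zero_mul, zero_add]

lemma EE_step1 (A : Fin n → Matrix (Fin d) (Fin d) ℝ) (m : ℕ) :
    EE n (XM A ^ (m + 2)).trace = EE n (∑ i, ∑ k ∈ Finset.range (m + 1),
      (cM n (A i) * XM A ^ k * cM n (A i) * XM A ^ (m - k)).trace) := by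
  have h0 : XM A ^ (m + 2) = XM A * XM A ^ (m + 1) := pow_succ' _ _
  rw [h0, EE_ibp_matrix, map_sum]
  refine Finset.sum_congr rfl fun i _ => ?_
  have h1 : (cM n (A i) * DM i (XM A ^ (m + 1))).trace = ∑ k ∈ Finset.range (m + 1),
      (cM n (A i) * XM A ^ k * cM n (A i) * XM A ^ (m - k)).trace := by
    rw [DM_pow, Finset.mul_sum, Matrix.trace_sum]
    refine Finset.sum_congr rfl fun k _ => ?_
    rw [Nat.add_sub_cancel, mul_assoc, mul_assoc, mul_assoc]
  rw [h1]

lemma EE_step2 (A : Fin n → Matrix (Fin d) (Fin d) ℝ) (m : ℕ) :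
    EE n (∑ i, (cM n (A i) * XM A ^ 2 * cM n (A i) * XM A ^ m).trace) =
    EE n (∑ i, ∑ j, ((cM n (A j) * cM n (A j) * cM n (A i) * XM A ^ m * cM n (A i)).trace +
      ∑ k ∈ Finset.range m, (cM n (A j) * XM A * cM n (A i) * XM A ^ k * cM n (A j)
        * XM A ^ (m - 1 - k) * cM n (A i)).trace)) := by
  rw [map_sum, map_sum]
  refine Finset.sum_congr rfl fun i _ => ?_
  have h : (cM n (A i) * XM A ^ 2 * cM n (A i) * XM A ^ m).trace
      = (XM A * (XM A * (cM n (A i) * (XM A ^ m * cM n (A i))))).trace := by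
    rw [mul_assoc, mul_assoc, Matrix.trace_mul_comm]
    simp only [pow_two, mul_assoc]
  rw [h, EE_ibp_matrix, map_sum]
  refine Finset.sum_congr rfl fun j _ => ?_
  congr 1
  simp only [DM_mul, DM_cM, DM_XM, DM_pow, zero_mul, mul_zero, zero_add, add_zero, mul_add,
    Matrix.trace_add, Finset.sum_mul, Finset.mul_sum, Matrix.trace_sum, mul_assoc]

/-- evaluation of polynomial matrices -/
noncomputable def ev (g : Fin n → ℝ) : PMat n d →+* Matrix (Fin d) (Fin d) ℝ :=
  (MvPolynomial.eval g).mapMatrix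

lemma eval_trace (g : Fin n → ℝ) (M : PMat n d) :
    MvPolynomial.eval g M.trace = (ev g M).trace := by
  simp [Matrix.trace, ev]

lemma ev_cM (g : Fin n → ℝ) (B : Matrix (Fin d) (Fin d) ℝ) : ev g (cM n B) = B := by
  ext a b
  simp [ev, cM]

lemma ev_XM (g : Fin n → ℝ) (A : Fin n → Matrix (Fin d) (Fin d) ℝ) :
    ev g (XM A) = ∑ i, g i • A i := by
  ext a b
  simp [ev, XM, cM, Matrix.sum_apply]

lemma muirhead_nonneg (x y : ℝ) (hx : 0 ≤ x) (hy : 0 ≤ y) (a b : ℕ) :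
    x ^ (a + 2) * y ^ (b + 2) + x ^ (b + 2) * y ^ (a + 2) ≤
      x ^ 2 * y ^ (a + b + 2) + x ^ (a + b + 2) * y ^ 2 := by
  have h : 0 ≤ (x ^ a - y ^ a) * (x ^ b - y ^ b) := by
    rcases le_total x y with h | h
    · exact mul_nonneg_of_nonpos_of_nonpos (sub_nonpos.2 (pow_le_pow_left₀ hx h a))
        (sub_nonpos.2 (pow_le_pow_left₀ hx h b))
    · exact mul_nonneg (sub_nonneg.2 (pow_le_pow_left₀ hy h a))
        (sub_nonneg.2 (pow_le_pow_left₀ hy h b))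
  have h2 := mul_nonneg (mul_nonneg (sq_nonneg x) (sq_nonneg y)) h
  have e : x ^ 2 * y ^ (a + b + 2) + x ^ (a + b + 2) * y ^ 2
    - (x ^ (a + 2) * y ^ (b + 2) + x ^ (b + 2) * y ^ (a + 2))
    = x ^ 2 * y ^ 2 * ((x ^ a - y ^ a) * (x ^ b - y ^ b)) := by ring
  linarith

lemma F_one (x y : ℝ) (hx : 0 ≤ x) (hy : 0 ≤ y) (r : ℕ) :
    x * y ^ (r + 1) ≤ y ^ (r + 2) + x ^ 2 * y ^ r := by
  have h := mul_nonneg (pow_nonneg hy r) (sq_nonneg (x - y))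
  have h1 : 0 ≤ x * y ^ (r + 1) := by positivity
  have e : y ^ r * (x - y) ^ 2 = y ^ (r + 2) + x ^ 2 * y ^ r - 2 * (x * y ^ (r + 1)) := by ring
  linarith

lemma F_bound_nonneg (x y : ℝ) (hx : 0 ≤ x) (hy : 0 ≤ y) (r k : ℕ) (hk : k < r + 3) :
    x ^ k * y ^ (r + 2 - k) + x ^ (r + 2 - k) * y ^ k ≤
      (x ^ 2 * y ^ r + x ^ r * y ^ 2) +
      (if k = 0 then x ^ (r + 2) + y ^ (r + 2) else 0) +
      (if k = 1 then x ^ (r + 2) + y ^ (r + 2) else 0) +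
      (if k = r + 1 then x ^ (r + 2) + y ^ (r + 2) else 0) +
      (if k = r + 2 then x ^ (r + 2) + y ^ (r + 2) else 0) := by
  have h0 : 0 ≤ x ^ (r + 2) + y ^ (r + 2) := by positivity
  have h2 : 0 ≤ x ^ 2 * y ^ r + x ^ r * y ^ 2 := by positivity
  have i1 : ∀ (c : Prop) [Decidable c], 0 ≤ (if c then x ^ (r + 2) + y ^ (r + 2) else 0) := by
    intro c _
    split_ifs
    · exact h0
    · exact le_rfl
  have f1 := F_one x y hx hy r
  have f2 := F_one y x hy hx r
  have j0 := i1 (k = 0)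
  have j1 := i1 (k = 1)
  have j2 := i1 (k = r + 1)
  have j3 := i1 (k = r + 2)
  by_cases k0 : k = 0
  · rw [if_pos k0]
    subst k0
    simp only [pow_zero, Nat.sub_zero, one_mul, mul_one]
    linarith
  by_cases k3 : k = r + 2
  · rw [if_pos k3]
    subst k3
    simp only [Nat.sub_self, pow_zero, one_mul, mul_one]
    linarith
  by_cases k1 : k = 1
  · rw [if_pos k1]
    subst k1
    have : r + 2 - 1 = r + 1 := by omega
    rw [this]
    simp only [pow_one]
    linarith
  by_cases k2 : k = r + 1
  · rw [if_pos k2]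
    subst k2
    have : r + 2 - (r + 1) = 1 := by omega
    rw [this]
    simp only [pow_one]
    linarith
  obtain ⟨a, rfl⟩ : ∃ a, k = a + 2 := ⟨k - 2, by omega⟩
  obtain ⟨b, rfl⟩ : ∃ b, r = a + b + 2 := ⟨r - a - 2, by omega⟩
  have : a + b + 2 + 2 - (a + 2) = b + 2 := by omega
  rw [this]
  have := muirhead_nonneg x y hx hy a b
  linarith

lemma F_sum (x y : ℝ) (r : ℕ) (hr : Even r) :
    ∑ k ∈ Finset.range (r + 3), (x ^ k * y ^ (r + 2 - k) + x ^ (r + 2 - k) * y ^ k) ≤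
      (r + 3) * (x ^ 2 * y ^ r + x ^ r * y ^ 2) + 4 * (x ^ (r + 2) + y ^ (r + 2)) := by
  have hr2 : Even (r + 2) := hr.add even_two
  have hb : ∀ k ∈ Finset.range (r + 3),
      x ^ k * y ^ (r + 2 - k) + x ^ (r + 2 - k) * y ^ k ≤
      (x ^ 2 * y ^ r + x ^ r * y ^ 2) +
      (if k = 0 then x ^ (r + 2) + y ^ (r + 2) else 0) +
      (if k = 1 then x ^ (r + 2) + y ^ (r + 2) else 0) +
      (if k = r + 1 then x ^ (r + 2) + y ^ (r + 2) else 0) +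
      (if k = r + 2 then x ^ (r + 2) + y ^ (r + 2) else 0) := by
    intro k hk
    have h := F_bound_nonneg |x| |y| (abs_nonneg x) (abs_nonneg y) r k (Finset.mem_range.1 hk)
    rw [hr.pow_abs, hr.pow_abs, hr2.pow_abs, hr2.pow_abs, sq_abs, sq_abs] at h
    refine le_trans ?_ h
    refine add_le_add ?_ ?_ <;>
    · rw [← abs_pow, ← abs_pow, ← abs_mul]
      exact le_abs_self _
  refine (Finset.sum_le_sum hb).trans ?_
  simp only [Finset.sum_add_distrib, Finset.sum_ite_eq', Finset.sum_const, Finset.card_range,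
    Finset.mem_range, nsmul_eq_mul]
  rw [if_pos (by omega), if_pos (by omega), if_pos (by omega), if_pos (by omega)]
  push_cast
  linarith

/-- row bound hypothesis -/
def HS (B : Fin n → Matrix (Fin d) (Fin d) ℝ) (s : ℝ) : Prop :=
  ∀ x : Fin d → ℝ, ∑ i, (B i).mulVec x ⬝ᵥ (B i).mulVec x ≤ s * (x ⬝ᵥ x)

/-- covariance bound hypothesis -/
def HW (B : Fin n → Matrix (Fin d) (Fin d) ℝ) (w : ℝ) : Prop :=
  ∀ N : Matrix (Fin d) (Fin d) ℝ, ∑ i, ((B i).transpose * N).trace ^ 2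
    ≤ w * (N.transpose * N).trace

section diag

variable {B : Fin n → Matrix (Fin d) (Fin d) ℝ} {s w : ℝ}

lemma HS.col (h : HS B s) (a : Fin d) : ∑ i, ∑ c, B i c a ^ 2 ≤ s := by
  have := h (Pi.single a 1)
  simpa [dotProduct, Matrix.mulVec_single_one, Pi.single_apply, pow_two] using this

lemma HS.row (h : HS B s) (hB : ∀ i, (B i).IsSymm) (a : Fin d) : ∑ i, ∑ c, B i a c ^ 2 ≤ s := by
  refine le_trans (le_of_eq ?_) (h.col a)
  refine Finset.sum_congr rfl fun i _ => Finset.sum_congr rfl fun c _ => ?_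
  rw [(hB i).apply]

lemma trace_diag2 (M : Matrix (Fin d) (Fin d) ℝ) (hM : M.IsSymm) (l : Fin d → ℝ) (k m : ℕ) :
    (M * Matrix.diagonal l ^ k * M * Matrix.diagonal l ^ m).trace
      = ∑ a, ∑ b, M a b ^ 2 * (l b ^ k * l a ^ m) := by
  rw [Matrix.diagonal_pow, Matrix.diagonal_pow, Matrix.trace]
  refine Finset.sum_congr rfl fun a _ => ?_
  rw [Matrix.diag_apply, Matrix.mul_diagonal, Matrix.mul_apply, Finset.sum_mul]
  refine Finset.sum_congr rfl fun b _ => ?_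
  rw [Matrix.mul_diagonal, hM.apply a b, Pi.pow_apply, Pi.pow_apply]
  ring

lemma trace_diag2_symm (M : Matrix (Fin d) (Fin d) ℝ) (hM : M.IsSymm) (l : Fin d → ℝ)
    (k m : ℕ) :
    2 * (M * Matrix.diagonal l ^ k * M * Matrix.diagonal l ^ m).trace
      = ∑ a, ∑ b, M a b ^ 2 * (l a ^ k * l b ^ m + l a ^ m * l b ^ k) := by
  have h1 := trace_diag2 M hM l k m
  have h2 : (M * Matrix.diagonal l ^ k * M * Matrix.diagonal l ^ m).trace
      = ∑ a, ∑ b, M a b ^ 2 * (l a ^ k * l b ^ m) := by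
    rw [h1, Finset.sum_comm]
    refine Finset.sum_congr rfl fun a _ => Finset.sum_congr rfl fun b _ => ?_
    rw [hM.apply a b]
  rw [two_mul]
  conv_lhs =>
    congr
    · rw [h2]
    · rw [h1]
  rw [← Finset.sum_add_distrib]
  refine Finset.sum_congr rfl fun a _ => ?_
  rw [← Finset.sum_add_distrib]
  refine Finset.sum_congr rfl fun b _ => ?_
  ring

lemma P1_diag (hB : ∀ i, (B i).IsSymm) (hs : HS B s) (l : Fin d → ℝ) (r : ℕ) (hr : Even r) :
    ∑ i, ∑ k ∈ Finset.range (r + 2 + 1),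
      (B i * Matrix.diagonal l ^ k * B i * Matrix.diagonal l ^ (r + 2 - k)).trace ≤
    4 * s * (Matrix.diagonal l ^ (r + 2)).trace
      + (r + 3) * ∑ i, (B i * Matrix.diagonal l ^ 2 * B i * Matrix.diagonal l ^ r).trace := by
  have hr2 : Even (r + 2) := hr.add even_two
  have key : ∀ i, ∑ k ∈ Finset.range (r + 2 + 1),
      2 * (B i * Matrix.diagonal l ^ k * B i * Matrix.diagonal l ^ (r + 2 - k)).trace ≤
      (r + 3) * (2 * (B i * Matrix.diagonal l ^ 2 * B i * Matrix.diagonal l ^ r).trace)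
      + 4 * (2 * (B i * Matrix.diagonal l ^ 0 * B i * Matrix.diagonal l ^ (r + 2)).trace) := by
    intro i
    simp only [trace_diag2_symm (B i) (hB i)]
    rw [Finset.sum_comm, Finset.mul_sum, Finset.mul_sum, ← Finset.sum_add_distrib]
    refine Finset.sum_le_sum fun a _ => ?_
    rw [Finset.sum_comm, Finset.mul_sum, Finset.mul_sum, ← Finset.sum_add_distrib]
    refine Finset.sum_le_sum fun b _ => ?_
    rw [← Finset.mul_sum]
    have := mul_le_mul_of_nonneg_left (F_sum (l a) (l b) r hr) (sq_nonneg (B i a b))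
    refine this.trans (le_of_eq ?_)
    ring
  have h2 := Finset.sum_le_sum fun i (_ : i ∈ Finset.univ) => key i
  simp only [← Finset.mul_sum, Finset.sum_add_distrib] at h2
  have h3 : ∑ i, (B i * Matrix.diagonal l ^ 0 * B i * Matrix.diagonal l ^ (r + 2)).trace
      ≤ s * (Matrix.diagonal l ^ (r + 2)).trace := by
    simp only [trace_diag2 (B _) (hB _)]
    rw [Finset.sum_comm, Matrix.diagonal_pow, Matrix.trace_diagonal, Finset.mul_sum]
    refine Finset.sum_le_sum fun a _ => ?_
    simp only [pow_zero, one_mul, ← Finset.sum_mul]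
    exact mul_le_mul_of_nonneg_right (hs.row hB a) (hr2.pow_nonneg (l a))
  linarith

lemma P2a_diag (hB : ∀ i, (B i).IsSymm) (hs0 : 0 ≤ s) (hs : HS B s) (l : Fin d → ℝ) (m : ℕ)
    (hm : Even m) :
    ∑ i, ∑ j, (B j * B j * B i * Matrix.diagonal l ^ m * B i).trace ≤
      s ^ 2 * (Matrix.diagonal l ^ m).trace := by
  have h1 : ∀ i j, (B j * B j * B i * Matrix.diagonal l ^ m * B i).trace
      = ∑ a, l a ^ m * ((B j).mulVec (fun c => B i c a) ⬝ᵥ (B j).mulVec (fun c => B i c a)) := by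
    intro i j
    have : (B j * B j * B i * Matrix.diagonal l ^ m * B i).trace
      = ((B j * B i).transpose * (B j * B i) * Matrix.diagonal l ^ m).trace := by
      rw [Matrix.transpose_mul, (hB i).eq, (hB j).eq, Matrix.trace_mul_comm]
      simp only [mul_assoc]
    rw [this, Matrix.diagonal_pow, Matrix.trace]
    refine Finset.sum_congr rfl fun a _ => ?_
    rw [Matrix.diag_apply, Matrix.mul_diagonal, mul_comm]
    rfl
  simp only [h1]
  have h2 : ∀ i, ∑ j, ∑ a, l a ^ m *
      ((B j).mulVec (fun c => B i c a) ⬝ᵥ (B j).mulVec (fun c => B i c a)) ≤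
      ∑ a, l a ^ m * (s * ∑ c, B i c a ^ 2) := by
    intro i
    rw [Finset.sum_comm]
    refine Finset.sum_le_sum fun a _ => ?_
    rw [← Finset.mul_sum]
    refine mul_le_mul_of_nonneg_left ?_ (hm.pow_nonneg _)
    refine (hs _).trans (le_of_eq ?_)
    simp [dotProduct, pow_two]
  refine (Finset.sum_le_sum fun i _ => h2 i).trans ?_
  rw [Finset.sum_comm, Matrix.diagonal_pow, Matrix.trace_diagonal, Finset.mul_sum]
  refine Finset.sum_le_sum fun a _ => ?_
  rw [← Finset.mul_sum, ← Finset.mul_sum, Pi.pow_apply, mul_comm, pow_two]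
  exact mul_le_mul_of_nonneg_right (mul_le_mul_of_nonneg_left (hs.col a) hs0) (hm.pow_nonneg _)

/-- covariance kernel -/
def KK (B : Fin n → Matrix (Fin d) (Fin d) ℝ) (p q : Fin d × Fin d) : ℝ :=
  ∑ i, B i p.1 p.2 * B i q.1 q.2

lemma KK_comm (p q : Fin d × Fin d) : KK B p q = KK B q p := by
  simp only [KK, mul_comm]

lemma KK_sq (hw0 : 0 ≤ w) (hw : HW B w) (p : Fin d × Fin d) :
    ∑ q, KK B p q ^ 2 ≤ w * ∑ i, B i p.1 p.2 ^ 2 := by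
  set T := ∑ q, KK B p q ^ 2 with hT
  have hT0 : 0 ≤ T := Finset.sum_nonneg fun q _ => sq_nonneg _
  have h1 := hw (Matrix.of fun c e => KK B p (c, e))
  have h2 : ((Matrix.of fun c e => KK B p (c, e)).transpose *
      (Matrix.of fun c e => KK B p (c, e))).trace = T := by
    rw [hT, Fintype.sum_prod_type_right]
    simp [Matrix.trace, Matrix.mul_apply, pow_two]
  have h3 : ∀ i, ((B i).transpose * (Matrix.of fun c e => KK B p (c, e))).trace
      = ∑ q : Fin d × Fin d, B i q.1 q.2 * KK B p q := by
    intro i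
    rw [Fintype.sum_prod_type_right]
    simp [Matrix.trace, Matrix.mul_apply]
  simp only [h2, h3] at h1
  have h4 : T = ∑ i, B i p.1 p.2 * ∑ q : Fin d × Fin d, B i q.1 q.2 * KK B p q := by
    simp only [Finset.mul_sum]
    rw [Finset.sum_comm, hT]
    refine Finset.sum_congr rfl fun q _ => ?_
    rw [pow_two]
    nth_rewrite 1 [KK]
    rw [Finset.sum_mul]
    refine Finset.sum_congr rfl fun i _ => ?_
    ring
  have h5 := Finset.sum_mul_sq_le_sq_mul_sq Finset.univ (fun i => B i p.1 p.2)
    (fun i => ∑ q : Fin d × Fin d, B i q.1 q.2 * KK B p q)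
  rw [← h4] at h5
  have h6 : T ^ 2 ≤ (∑ i, B i p.1 p.2 ^ 2) * (w * T) :=
    h5.trans (mul_le_mul_of_nonneg_left h1 (Finset.sum_nonneg fun i _ => sq_nonneg _))
  rcases hT0.eq_or_lt with h | h
  · rw [← h]
    exact mul_nonneg hw0 (Finset.sum_nonneg fun i _ => sq_nonneg _)
  · refine le_of_mul_le_mul_right ?_ h
    linarith

lemma KK_Q1 (hB : ∀ i, (B i).IsSymm) (hw0 : 0 ≤ w) (hs : HS B s) (hw : HW B w)
    (f : Fin d → ℝ) (hf : ∀ a, 0 ≤ f a) :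
    ∑ p : Fin d × Fin d, ∑ q, f p.1 * KK B p q ^ 2 ≤ s * w * ∑ a, f a := by
  have h : ∀ p : Fin d × Fin d, ∑ q, f p.1 * KK B p q ^ 2 ≤
      f p.1 * (w * ∑ i, B i p.1 p.2 ^ 2) := fun p => by
    rw [← Finset.mul_sum]
    exact mul_le_mul_of_nonneg_left (KK_sq hw0 hw p) (hf _)
  refine (Finset.sum_le_sum fun p _ => h p).trans ?_
  rw [Fintype.sum_prod_type, Finset.mul_sum]
  refine Finset.sum_le_sum fun a _ => ?_
  dsimp only
  rw [← Finset.mul_sum, ← Finset.mul_sum, Finset.sum_comm, mul_comm, mul_comm s w]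
  exact mul_le_mul_of_nonneg_right (mul_le_mul_of_nonneg_left (hs.row hB a) hw0) (hf a)

lemma KK_Q2 (hB : ∀ i, (B i).IsSymm) (hw0 : 0 ≤ w) (hs : HS B s) (hw : HW B w)
    (f : Fin d → ℝ) (hf : ∀ a, 0 ≤ f a) :
    ∑ p : Fin d × Fin d, ∑ q, f p.2 * KK B p q ^ 2 ≤ s * w * ∑ a, f a := by
  have h : ∀ p : Fin d × Fin d, ∑ q, f p.2 * KK B p q ^ 2 ≤
      f p.2 * (w * ∑ i, B i p.1 p.2 ^ 2) := fun p => by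
    rw [← Finset.mul_sum]
    exact mul_le_mul_of_nonneg_left (KK_sq hw0 hw p) (hf _)
  refine (Finset.sum_le_sum fun p _ => h p).trans ?_
  rw [Fintype.sum_prod_type_right, Finset.mul_sum]
  refine Finset.sum_le_sum fun a _ => ?_
  dsimp only
  rw [← Finset.mul_sum, ← Finset.mul_sum, Finset.sum_comm, mul_comm, mul_comm s w]
  exact mul_le_mul_of_nonneg_right (mul_le_mul_of_nonneg_left (hs.col a) hw0) (hf a)

lemma KK_Q (hB : ∀ i, (B i).IsSymm) (hw0 : 0 ≤ w) (hs : HS B s) (hw : HW B w)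
    (f : Fin d → ℝ) (hf : ∀ a, 0 ≤ f a) :
    ∑ a, ∑ b, ∑ c, ∑ e, (f a + f b + f c + f e) * KK B (a, b) (c, e) ^ 2
      ≤ 4 * (s * w) * ∑ a, f a := by
  have h1 := KK_Q1 hB hw0 hs hw f hf
  have h2 := KK_Q2 hB hw0 hs hw f hf
  have h3 := h1
  have h4 := h2
  rw [Finset.sum_comm] at h3 h4
  have e : ∑ a, ∑ b, ∑ c, ∑ e, (f a + f b + f c + f e) * KK B (a, b) (c, e) ^ 2
    = ∑ p : Fin d × Fin d, ∑ q : Fin d × Fin d, f p.1 * KK B p q ^ 2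
      + ∑ p : Fin d × Fin d, ∑ q : Fin d × Fin d, f p.2 * KK B p q ^ 2
      + ∑ p : Fin d × Fin d, ∑ q : Fin d × Fin d, f q.1 * KK B q p ^ 2
      + ∑ p : Fin d × Fin d, ∑ q : Fin d × Fin d, f q.2 * KK B q p ^ 2 := by
    simp only [← Finset.sum_add_distrib, Fintype.sum_prod_type]
    refine Finset.sum_congr rfl fun a _ => Finset.sum_congr rfl fun b _ =>
      Finset.sum_congr rfl fun c _ => Finset.sum_congr rfl fun e _ => ?_
    rw [KK_comm (c, e)]
    ring
  rw [e]
  linarith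

lemma weight_bound (x y z : ℝ) (m k : ℕ) (hm : Even m) (hk : k < m) :
    |x * y ^ k * z ^ (m - 1 - k)| ≤ x ^ m + y ^ m + z ^ m := by
  rw [abs_mul, abs_mul, abs_pow, abs_pow, ← hm.pow_abs x, ← hm.pow_abs y, ← hm.pow_abs z]
  generalize hx : |x| = X
  generalize hy : |y| = Y
  generalize hz : |z| = Z
  have hX : 0 ≤ X := hx ▸ abs_nonneg x
  have hY : 0 ≤ Y := hy ▸ abs_nonneg y
  have hZ : 0 ≤ Z := hz ▸ abs_nonneg z
  have key : ∀ M : ℝ, X ≤ M → Y ≤ M → Z ≤ M → X * Y ^ k * Z ^ (m - 1 - k) ≤ M ^ m := by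
    intro M h1 h2 h3
    have hM : 0 ≤ M := hX.trans h1
    have : M ^ m = M * M ^ k * M ^ (m - 1 - k) := by
      rw [← pow_succ', ← pow_add]
      congr 1
      omega
    rw [this]
    gcongr
  have pX := pow_nonneg hX m
  have pY := pow_nonneg hY m
  have pZ := pow_nonneg hZ m
  rcases le_total X Y with h1 | h1
  · rcases le_total Y Z with h2 | h2
    · linarith [key Z (h1.trans h2) h2 le_rfl]
    · linarith [key Y h1 le_rfl h2]
  · rcases le_total X Z with h2 | h2
    · linarith [key Z h2 (h1.trans h2) le_rfl]
    · linarith [key X le_rfl h1 h2]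

lemma sum_cyc (G : Fin d → Fin d → Fin d → Fin d → ℝ) :
    ∑ a, ∑ b, ∑ c, ∑ e, G b c e a = ∑ a, ∑ b, ∑ c, ∑ e, G a b c e := by
  rw [Finset.sum_comm]
  refine Finset.sum_congr rfl fun a _ => ?_
  rw [Finset.sum_comm]
  refine Finset.sum_congr rfl fun b _ => ?_
  rw [Finset.sum_comm]

lemma trace_S (l : Fin d → ℝ) (k m : ℕ) :
    ∑ i, ∑ j, (B j * Matrix.diagonal l * B i * Matrix.diagonal l ^ k * B j
        * Matrix.diagonal l ^ m * B i).trace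
    = ∑ a, ∑ b, ∑ c, ∑ e, (l b * l c ^ k * l e ^ m) *
        (KK B (a, b) (c, e) * KK B (b, c) (e, a)) := by
  have h1 : ∀ i j, (B j * Matrix.diagonal l * B i * Matrix.diagonal l ^ k * B j
        * Matrix.diagonal l ^ m * B i).trace = ∑ a, ∑ b, ∑ c, ∑ e,
        (l b * l c ^ k * l e ^ m) * ((B j a b * B j c e) * (B i b c * B i e a)) := by
    intro i j
    rw [Matrix.diagonal_pow, Matrix.diagonal_pow, Matrix.trace]
    refine Finset.sum_congr rfl fun a _ => ?_
    have h : (B j * Matrix.diagonal l * B i * Matrix.diagonal (l ^ k) * B j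
        * Matrix.diagonal (l ^ m) * B i).diag a = ((B j * Matrix.diagonal l) * ((B i *
        Matrix.diagonal (l ^ k)) * ((B j * Matrix.diagonal (l ^ m)) * B i))) a a := by
      rw [Matrix.diag_apply]
      simp only [mul_assoc]
    rw [h, Matrix.mul_apply]
    refine Finset.sum_congr rfl fun b _ => ?_
    rw [Matrix.mul_diagonal, Matrix.mul_apply, Finset.mul_sum]
    refine Finset.sum_congr rfl fun c _ => ?_
    rw [Matrix.mul_diagonal, Matrix.mul_apply, Finset.mul_sum, Finset.mul_sum]
    refine Finset.sum_congr rfl fun e _ => ?_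
    rw [Matrix.mul_diagonal, Pi.pow_apply, Pi.pow_apply]
    ring
  have h2 : ∀ a b c e, (l b * l c ^ k * l e ^ m) *
        (KK B (a, b) (c, e) * KK B (b, c) (e, a)) = ∑ i, ∑ j,
        (l b * l c ^ k * l e ^ m) * ((B j a b * B j c e) * (B i b c * B i e a)) := by
    intro a b c e
    simp only [KK, ← Finset.mul_sum, ← Finset.sum_mul]
  have pull : ∀ G : Fin n → Fin d → ℝ, ∑ i, ∑ a, G i a = ∑ a, ∑ i, G i a :=
    fun G => Finset.sum_comm
  simp only [h1, h2]
  simp only [pull]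

lemma P2b_diag (hB : ∀ i, (B i).IsSymm) (hw0 : 0 ≤ w) (hs : HS B s) (hw : HW B w)
    (l : Fin d → ℝ) (m k : ℕ) (hm : Even m) (hk : k < m) :
    ∑ i, ∑ j, (B j * Matrix.diagonal l * B i * Matrix.diagonal l ^ k * B j
        * Matrix.diagonal l ^ (m - 1 - k) * B i).trace
    ≤ 4 * (s * w) * (Matrix.diagonal l ^ m).trace := by
  rw [trace_S, Matrix.diagonal_pow, Matrix.trace_diagonal]
  set f : Fin d → ℝ := l ^ m with hf
  have hf0 : ∀ a, 0 ≤ f a := fun a => hm.pow_nonneg (l a)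
  have hQ := KK_Q hB hw0 hs hw f hf0
  have hcyc := sum_cyc (fun a b c e => (f a + f b + f c + f e) * KK B (a, b) (c, e) ^ 2)
  have hle : ∑ a, ∑ b, ∑ c, ∑ e, (l b * l c ^ k * l e ^ (m - 1 - k)) *
        (KK B (a, b) (c, e) * KK B (b, c) (e, a)) ≤
      ∑ a, ∑ b, ∑ c, ∑ e, (((f a + f b + f c + f e) * KK B (a, b) (c, e) ^ 2) * (1 / 2)
        + ((f b + f c + f e + f a) * KK B (b, c) (e, a) ^ 2) * (1 / 2)) := by
    refine Finset.sum_le_sum fun a _ => Finset.sum_le_sum fun b _ =>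
      Finset.sum_le_sum fun c _ => Finset.sum_le_sum fun e _ => ?_
    generalize KK B (a, b) (c, e) = u
    generalize KK B (b, c) (e, a) = v
    have h1 : |l b * l c ^ k * l e ^ (m - 1 - k)| ≤ f a + f b + f c + f e := by
      have := weight_bound (l b) (l c) (l e) m k hm hk
      have h0 := hf0 a
      simp only [hf, Pi.pow_apply] at h0 ⊢
      linarith
    have h2 : |u * v| ≤ (u ^ 2 + v ^ 2) / 2 := by
      rw [abs_le]
      constructor <;> nlinarith [sq_nonneg (u + v), sq_nonneg (u - v)]
    have h3 : 0 ≤ f a + f b + f c + f e := (abs_nonneg _).trans h1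
    calc _ ≤ |(l b * l c ^ k * l e ^ (m - 1 - k)) * (u * v)| := le_abs_self _
      _ = |l b * l c ^ k * l e ^ (m - 1 - k)| * |u * v| := abs_mul _ _
      _ ≤ (f a + f b + f c + f e) * ((u ^ 2 + v ^ 2) / 2) :=
        mul_le_mul h1 h2 (abs_nonneg _) h3
      _ = _ := by ring
  refine hle.trans ?_
  simp only [Finset.sum_add_distrib, ← Finset.sum_mul] at hQ hcyc ⊢
  linarith

lemma P2_diag (hB : ∀ i, (B i).IsSymm) (hs0 : 0 ≤ s) (hw0 : 0 ≤ w) (hs : HS B s) (hw : HW B w)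
    (l : Fin d → ℝ) (m : ℕ) (hm : Even m) :
    ∑ i, ∑ j, ((B j * B j * B i * Matrix.diagonal l ^ m * B i).trace +
      ∑ k ∈ Finset.range m, (B j * Matrix.diagonal l * B i * Matrix.diagonal l ^ k * B j
        * Matrix.diagonal l ^ (m - 1 - k) * B i).trace)
    ≤ (s ^ 2 + m * (4 * (s * w))) * (Matrix.diagonal l ^ m).trace := by
  have h1 := P2a_diag hB hs0 hs l m hm
  have h2 : ∑ k ∈ Finset.range m, ∑ i, ∑ j, (B j * Matrix.diagonal l * B i *
      Matrix.diagonal l ^ k * B j * Matrix.diagonal l ^ (m - 1 - k) * B i).trace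
      ≤ ∑ k ∈ Finset.range m, 4 * (s * w) * (Matrix.diagonal l ^ m).trace :=
    Finset.sum_le_sum fun k hk => P2b_diag hB hw0 hs hw l m k hm (Finset.mem_range.1 hk)
  rw [Finset.sum_const, Finset.card_range, nsmul_eq_mul, Finset.sum_comm] at h2
  have h3 : ∀ i, ∑ k ∈ Finset.range m, ∑ j, (B j * Matrix.diagonal l * B i *
      Matrix.diagonal l ^ k * B j * Matrix.diagonal l ^ (m - 1 - k) * B i).trace
      = ∑ j, ∑ k ∈ Finset.range m, (B j * Matrix.diagonal l * B i *
      Matrix.diagonal l ^ k * B j * Matrix.diagonal l ^ (m - 1 - k) * B i).trace :=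
    fun i => Finset.sum_comm
  simp only [h3] at h2
  simp only [Finset.sum_add_distrib]
  linarith

end diag

/-- conjugation by an orthogonal matrix -/
def cj (U : Matrix (Fin d) (Fin d) ℝ) (h1 : U * U.transpose = 1) (h2 : U.transpose * U = 1) :
    Matrix (Fin d) (Fin d) ℝ →+* Matrix (Fin d) (Fin d) ℝ where
  toFun M := U.transpose * M * U
  map_one' := by rw [mul_one, h2]
  map_mul' M N := by
    calc U.transpose * (M * N) * U = U.transpose * M * 1 * N * U := by
          rw [mul_one]; simp only [mul_assoc]
      _ = U.transpose * M * (U * U.transpose) * N * U := by rw [h1]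
      _ = _ := by simp only [mul_assoc]
  map_zero' := by simp
  map_add' M N := by rw [mul_add, add_mul]

section cj

variable {U : Matrix (Fin d) (Fin d) ℝ} {h1 : U * U.transpose = 1} {h2 : U.transpose * U = 1}

lemma cj_apply (M : Matrix (Fin d) (Fin d) ℝ) : cj U h1 h2 M = U.transpose * M * U := rfl

lemma cj_trace (M : Matrix (Fin d) (Fin d) ℝ) : (cj U h1 h2 M).trace = M.trace := by
  rw [cj_apply, Matrix.trace_mul_comm, ← mul_assoc, h1, one_mul]

lemma cj_symm (M : Matrix (Fin d) (Fin d) ℝ) (hM : M.IsSymm) : (cj U h1 h2 M).IsSymm := by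
  rw [Matrix.IsSymm, cj_apply, Matrix.transpose_mul, Matrix.transpose_mul,
    Matrix.transpose_transpose, hM.eq, mul_assoc]

lemma orth_dot (V : Matrix (Fin d) (Fin d) ℝ) (hV : V.transpose * V = 1) (x : Fin d → ℝ) :
    V.mulVec x ⬝ᵥ V.mulVec x = x ⬝ᵥ x := by
  rw [Matrix.dotProduct_mulVec, ← Matrix.mulVec_transpose, Matrix.mulVec_mulVec, hV,
    Matrix.one_mulVec]

lemma cj_HS {A : Fin n → Matrix (Fin d) (Fin d) ℝ} {s : ℝ} (h : HS A s) :
    HS (fun i => cj U h1 h2 (A i)) s := by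
  intro x
  have := h (U.mulVec x)
  rw [orth_dot U h2] at this
  refine le_trans (le_of_eq ?_) this
  refine Finset.sum_congr rfl fun i _ => ?_
  dsimp only
  rw [cj_apply, mul_assoc, ← Matrix.mulVec_mulVec,
    orth_dot _ (by rw [Matrix.transpose_transpose, h1]), ← Matrix.mulVec_mulVec]

lemma cj_HW {A : Fin n → Matrix (Fin d) (Fin d) ℝ} {w : ℝ} (h : HW A w) :
    HW (fun i => cj U h1 h2 (A i)) w := by
  intro N
  have := h (U * N * U.transpose)
  have e1 : ((U * N * U.transpose).transpose * (U * N * U.transpose)).trace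
      = (N.transpose * N).trace := by
    rw [← cj_trace (U := U) (h1 := h1) (h2 := h2), cj_apply]
    congr 1
    simp only [Matrix.transpose_mul, Matrix.transpose_transpose]
    calc U.transpose * (U * (N.transpose * U.transpose) * (U * N * U.transpose)) * U
        = (U.transpose * U) * N.transpose * (U.transpose * U) * N * (U.transpose * U) := by
          simp only [mul_assoc]
      _ = _ := by rw [h2]; simp
  have e2 : ∀ i, ((A i).transpose * (U * N * U.transpose)).trace
      = ((cj U h1 h2 (A i)).transpose * N).trace := by
    intro i
    rw [cj_apply]
    simp only [Matrix.transpose_mul, Matrix.transpose_transpose]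
    rw [← mul_assoc, Matrix.trace_mul_comm]
    simp only [mul_assoc]
  simp only [e1, e2] at this
  exact this

end cj

lemma exists_diag (X : Matrix (Fin d) (Fin d) ℝ) (hX : X.IsSymm) :
    ∃ (U : Matrix (Fin d) (Fin d) ℝ) (h1 : U * U.transpose = 1) (h2 : U.transpose * U = 1)
      (l : Fin d → ℝ), cj U h1 h2 X = Matrix.diagonal l := by
  have hH : X.IsHermitian := by
    rw [Matrix.IsHermitian, Matrix.conjTranspose_eq_transpose_of_trivial]; exact hX
  have e1 := Unitary.coe_mul_star_self hH.eigenvectorUnitary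
  have e2 := Unitary.coe_star_mul_self hH.eigenvectorUnitary
  simp only [Unitary.coe_star, Matrix.star_eq_conjTranspose,
    Matrix.conjTranspose_eq_transpose_of_trivial] at e1 e2
  refine ⟨hH.eigenvectorUnitary, e1, e2, hH.eigenvalues, ?_⟩
  have h := hH.conjStarAlgAut_star_eigenvectorUnitary
  rw [Unitary.conjStarAlgAut_apply] at h
  simp only [Unitary.coe_star, star_star, Matrix.star_eq_conjTranspose,
    Matrix.conjTranspose_eq_transpose_of_trivial] at h
  exact h

lemma P1 {A : Fin n → Matrix (Fin d) (Fin d) ℝ} {s : ℝ} (hA : ∀ i, (A i).IsSymm) (hs : HS A s)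
    (X : Matrix (Fin d) (Fin d) ℝ) (hX : X.IsSymm) (r : ℕ) (hr : Even r) :
    ∑ i, ∑ k ∈ Finset.range (r + 2 + 1), (A i * X ^ k * A i * X ^ (r + 2 - k)).trace ≤
    4 * s * (X ^ (r + 2)).trace + (r + 3) * ∑ i, (A i * X ^ 2 * A i * X ^ r).trace := by
  obtain ⟨U, h1, h2, l, h⟩ := exists_diag X hX
  have := P1_diag (fun i => cj_symm (h1 := h1) (h2 := h2) (A i) (hA i)) (cj_HS hs) l r hr
  rw [← h] at this
  simpa only [← map_mul, ← map_pow, cj_trace] using this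

lemma P2 {A : Fin n → Matrix (Fin d) (Fin d) ℝ} {s w : ℝ} (hA : ∀ i, (A i).IsSymm)
    (hs0 : 0 ≤ s) (hw0 : 0 ≤ w) (hs : HS A s) (hw : HW A w)
    (X : Matrix (Fin d) (Fin d) ℝ) (hX : X.IsSymm) (m : ℕ) (hm : Even m) :
    ∑ i, ∑ j, ((A j * A j * A i * X ^ m * A i).trace +
      ∑ k ∈ Finset.range m, (A j * X * A i * X ^ k * A j * X ^ (m - 1 - k) * A i).trace)
    ≤ (s ^ 2 + m * (4 * (s * w))) * (X ^ m).trace := by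
  obtain ⟨U, h1, h2, l, h⟩ := exists_diag X hX
  have := P2_diag (fun i => cj_symm (h1 := h1) (h2 := h2) (A i) (hA i)) hs0 hw0 (cj_HS hs)
    (cj_HW hw) l m hm
  rw [← h] at this
  simpa only [← map_mul, ← map_pow, cj_trace] using this

lemma P0 {A : Fin n → Matrix (Fin d) (Fin d) ℝ} {s : ℝ} (hA : ∀ i, (A i).IsSymm)
    (hs : HS A s) : ∑ i, (A i * A i).trace ≤ s * d := by
  have h : ∀ i, (A i * A i).trace = ∑ a, ∑ b, A i b a ^ 2 := by
    intro i
    rw [Matrix.trace]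
    refine Finset.sum_congr rfl fun a _ => ?_
    rw [Matrix.diag_apply, Matrix.mul_apply]
    refine Finset.sum_congr rfl fun b _ => ?_
    rw [(hA i).apply, pow_two]
  simp only [h]
  rw [Finset.sum_comm]
  refine (Finset.sum_le_sum fun a _ => hs.col a).trans ?_
  simp [mul_comm]

lemma norm_toEuclidean_sq (M : Matrix (Fin d) (Fin d) ℝ) (x : EuclideanSpace ℝ (Fin d)) :
    ‖LinearMap.toContinuousLinearMap (Matrix.toEuclideanLin M) x‖ ^ 2
      = M.mulVec x.ofLp ⬝ᵥ M.mulVec x.ofLp := by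
  rw [EuclideanSpace.norm_sq_eq]
  simp [dotProduct, pow_two, Matrix.toLpLin_apply]

lemma norm_sq_dot {ι : Type*} [Fintype ι] (x : EuclideanSpace ℝ ι) :
    ‖x‖ ^ 2 = x.ofLp ⬝ᵥ x.ofLp := by
  rw [EuclideanSpace.norm_sq_eq]
  simp [dotProduct, pow_two]

lemma opNorm_pow_le (hd : 0 < d) (X : Matrix (Fin d) (Fin d) ℝ) (hX : X.IsSymm) (m : ℕ)
    (hm : Even m) : opNorm X ^ m ≤ (X ^ m).trace := by
  obtain ⟨U, h1, h2, l, h⟩ := exists_diag X hX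
  have : Nonempty (Fin d) := ⟨⟨0, hd⟩⟩
  obtain ⟨a, ha⟩ := Finite.exists_max (fun a => |l a|)
  have hle : opNorm X ≤ |l a| := by
    refine ContinuousLinearMap.opNorm_le_bound _ (abs_nonneg _) fun x => ?_
    refine le_of_sq_le_sq ?_ (by positivity)
    rw [mul_pow, norm_toEuclidean_sq, norm_sq_dot]
    have e1 : X.mulVec x.ofLp ⬝ᵥ X.mulVec x.ofLp =
        (Matrix.diagonal l).mulVec (U.transpose.mulVec x.ofLp) ⬝ᵥ
        (Matrix.diagonal l).mulVec (U.transpose.mulVec x.ofLp) := by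
      rw [← orth_dot U.transpose (by rw [Matrix.transpose_transpose, h1]), ← h, cj_apply]
      simp only [Matrix.mulVec_mulVec, mul_assoc, h1, mul_one]
    rw [e1, ← orth_dot U.transpose (by rw [Matrix.transpose_transpose, h1]) x.ofLp]
    generalize U.transpose.mulVec x.ofLp = y
    simp only [dotProduct, Matrix.mulVec_diagonal, Finset.mul_sum]
    refine Finset.sum_le_sum fun b _ => ?_
    have : l b ^ 2 ≤ |l a| ^ 2 := by
      rw [← sq_abs (l b)]
      exact pow_le_pow_left₀ (abs_nonneg _) (ha b) 2
    nlinarith [mul_le_mul_of_nonneg_right this (mul_self_nonneg (y b))]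
  calc opNorm X ^ m ≤ |l a| ^ m := pow_le_pow_left₀ (norm_nonneg _) hle m
    _ = l a ^ m := hm.pow_abs _
    _ ≤ ∑ b, l b ^ m := Finset.single_le_sum (f := fun b => l b ^ m)
        (fun b _ => hm.pow_nonneg (l b)) (Finset.mem_univ a)
    _ = (X ^ m).trace := by
      rw [← cj_trace (U := U) (h1 := h1) (h2 := h2), map_pow, h, Matrix.diagonal_pow,
        Matrix.trace_diagonal]
      rfl

lemma dot_le_opNorm {ι : Type*} [Fintype ι] [DecidableEq ι] (M : Matrix ι ι ℝ) (x : ι → ℝ) :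
    x ⬝ᵥ M.mulVec x ≤ opNorm M * (x ⬝ᵥ x) := by
  set T := LinearMap.toContinuousLinearMap (Matrix.toEuclideanLin M) with hT
  set y : EuclideanSpace ℝ ι := WithLp.toLp 2 x with hy
  have h1 : inner ℝ y (T y) ≤ ‖y‖ * ‖T y‖ := real_inner_le_norm _ _
  have h2 : ‖T y‖ ≤ ‖T‖ * ‖y‖ := T.le_opNorm y
  have h3 : ‖y‖ ^ 2 = x ⬝ᵥ x := norm_sq_dot y
  have h4 : inner ℝ y (T y) = x ⬝ᵥ M.mulVec x := by
    rw [EuclideanSpace.inner_eq_star_dotProduct]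
    simp [hT, hy, Matrix.toLpLin_apply, dotProduct_comm]
  rw [← h4, ← h3]
  change _ ≤ ‖T‖ * _
  nlinarith [mul_le_mul_of_nonneg_left h2 (norm_nonneg y)]

lemma opNorm_nonneg {ι : Type*} [Fintype ι] [DecidableEq ι] (M : Matrix ι ι ℝ) :
    0 ≤ opNorm M := norm_nonneg _

lemma HS_sigma (A : Fin n → Matrix (Fin d) (Fin d) ℝ) (hA : ∀ i, (A i).IsSymm) :
    HS A (sigmaX A ^ 2) := by
  intro x
  rw [sigmaX, Real.sq_sqrt (opNorm_nonneg _)]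
  refine le_trans (le_of_eq ?_) (dot_le_opNorm _ x)
  rw [Matrix.sum_mulVec, dotProduct_sum]
  refine Finset.sum_congr rfl fun i _ => ?_
  rw [Matrix.dotProduct_mulVec, ← Matrix.mulVec_transpose, (hA i).eq, Matrix.mulVec_mulVec,
    dotProduct_comm]

lemma HW_v (A : Fin n → Matrix (Fin d) (Fin d) ℝ) : HW A (vX A ^ 2) := by
  intro N
  rw [vX, Real.sq_sqrt (opNorm_nonneg _)]
  have h := dot_le_opNorm (covX A) (fun p => N p.1 p.2)
  have e1 : (fun p : Fin d × Fin d => N p.1 p.2) ⬝ᵥ (fun p => N p.1 p.2)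
      = (N.transpose * N).trace := by
    simp only [dotProduct]
    rw [Fintype.sum_prod_type_right]
    simp [Matrix.trace, Matrix.mul_apply]
  have e2 : ∀ i, ((A i).transpose * N).trace = ∑ p : Fin d × Fin d, A i p.1 p.2 * N p.1 p.2 := by
    intro i
    rw [Fintype.sum_prod_type_right]
    simp [Matrix.trace, Matrix.mul_apply]
  have e3 : (fun p : Fin d × Fin d => N p.1 p.2) ⬝ᵥ (covX A).mulVec (fun p => N p.1 p.2)
      = ∑ i, ((A i).transpose * N).trace ^ 2 := by
    rw [covX, Matrix.sum_mulVec, dotProduct_sum]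
    refine Finset.sum_congr rfl fun i _ => ?_
    rw [e2, pow_two, Finset.sum_mul_sum]
    simp only [dotProduct, Matrix.mulVec, Matrix.of_apply, Finset.mul_sum]
    refine Finset.sum_congr rfl fun p _ => Finset.sum_congr rfl fun q _ => ?_
    ring
  rw [e1, e3] at h
  exact h

lemma XM_symm (A : Fin n → Matrix (Fin d) (Fin d) ℝ) (hA : ∀ i, (A i).IsSymm) (g : Fin n → ℝ) :
    (∑ i, g i • A i).IsSymm := by
  rw [Matrix.IsSymm, Matrix.transpose_sum]
  refine Finset.sum_congr rfl fun i _ => ?_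
  rw [Matrix.transpose_smul, (hA i).eq]

/-- moments -/
noncomputable def mom (A : Fin n → Matrix (Fin d) (Fin d) ℝ) (q : ℕ) : ℝ :=
  EE n (XM A ^ (2 * q)).trace

lemma mom_zero (A : Fin n → Matrix (Fin d) (Fin d) ℝ) : mom A 0 = d := by
  rw [mom, EE_apply]
  simp [eval_trace]

lemma mom_one (A : Fin n → Matrix (Fin d) (Fin d) ℝ) (hA : ∀ i, (A i).IsSymm) {s : ℝ}
    (hs : HS A s) : mom A 1 ≤ s * d := by
  have h := EE_step1 A 0
  have h0 : mom A 1 = EE n (XM A ^ (0 + 2)).trace := rfl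
  rw [h0, h, EE_apply]
  have : ∀ g : Fin n → ℝ, MvPolynomial.eval g (∑ i, ∑ k ∈ Finset.range (0 + 1),
      (cM n (A i) * XM A ^ k * cM n (A i) * XM A ^ (0 - k)).trace) = ∑ i, (A i * A i).trace := by
    intro g
    rw [map_sum]
    refine Finset.sum_congr rfl fun i _ => ?_
    rw [zero_add, Finset.sum_range_one, eval_trace]
    simp only [map_mul, map_pow, ev_cM, pow_zero, mul_one, Nat.sub_zero]
  simp only [this]
  rw [integral_const]
  simpa using P0 hA hs

lemma mom_rec (A : Fin n → Matrix (Fin d) (Fin d) ℝ) (hA : ∀ i, (A i).IsSymm) {s w : ℝ}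
    (hs0 : 0 ≤ s) (hw0 : 0 ≤ w) (hs : HS A s) (hw : HW A w) (q : ℕ) :
    mom A (q + 2) ≤ 4 * s * mom A (q + 1) +
      (2 * q + 3) * ((s ^ 2 + 2 * q * (4 * (s * w))) * mom A q) := by
  have hev : Even (2 * q) := even_two_mul q
  have e1 : mom A (q + 2) = EE n (XM A ^ (2 * q + 2 + 2)).trace := rfl
  have e2 : mom A (q + 1) = EE n (XM A ^ (2 * q + 2)).trace := rfl
  have a1 : EE n (∑ i, ∑ k ∈ Finset.range (2 * q + 2 + 1),
      (cM n (A i) * XM A ^ k * cM n (A i) * XM A ^ (2 * q + 2 - k)).trace) ≤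
      EE n ((4 * s) • (XM A ^ (2 * q + 2)).trace + (2 * q + 3 : ℝ) •
        ∑ i, (cM n (A i) * XM A ^ 2 * cM n (A i) * XM A ^ (2 * q)).trace) := by
    refine EE_mono fun g => ?_
    have := P1 hA hs _ (XM_symm A hA g) (2 * q) hev
    simp only [map_add, map_sum, MvPolynomial.smul_eval, eval_trace, map_mul, map_pow, ev_cM,
      ev_XM]
    push_cast at this
    exact this
  have a2 : EE n (∑ i, ∑ j, ((cM n (A j) * cM n (A j) * cM n (A i) * XM A ^ (2 * q)
        * cM n (A i)).trace +
      ∑ k ∈ Finset.range (2 * q), (cM n (A j) * XM A * cM n (A i) * XM A ^ k * cM n (A j)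
        * XM A ^ (2 * q - 1 - k) * cM n (A i)).trace)) ≤
      EE n ((s ^ 2 + 2 * q * (4 * (s * w)) : ℝ) • (XM A ^ (2 * q)).trace) := by
    refine EE_mono fun g => ?_
    have := P2 hA hs0 hw0 hs hw _ (XM_symm A hA g) (2 * q) hev
    simp only [map_add, map_sum, MvPolynomial.smul_eval, eval_trace, map_mul, map_pow, ev_cM,
      ev_XM]
    push_cast at this
    exact this
  rw [← EE_step1] at a1
  rw [← EE_step2] at a2
  rw [map_add, map_smul, map_smul, smul_eq_mul, smul_eq_mul] at a1
  rw [map_smul, smul_eq_mul] at a2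
  rw [e1, e2]
  refine a1.trans ?_
  have := mul_le_mul_of_nonneg_left a2 (by positivity : (0 : ℝ) ≤ 2 * q + 3)
  exact add_le_add le_rfl this

lemma mom_bound (A : Fin n → Matrix (Fin d) (Fin d) ℝ) (hA : ∀ i, (A i).IsSymm) {s w : ℝ}
    (hs0 : 0 ≤ s) (hw0 : 0 ≤ w) (hs : HS A s) (hw : HW A w) (p : ℕ) (L : ℝ) (hL0 : 0 ≤ L)
    (hL1 : s ≤ L)
    (hL : 4 * s * L + 2 * p * (s ^ 2 + 2 * p * (4 * (s * w))) ≤ L ^ 2) (q : ℕ) :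
    (q ≤ p → mom A q ≤ d * L ^ q) ∧ (q + 1 ≤ p → mom A (q + 1) ≤ d * L ^ (q + 1)) := by
  induction q with
  | zero =>
    refine ⟨fun _ => ?_, fun _ => ?_⟩
    · simp [mom_zero]
    · have := mom_one A hA hs
      refine this.trans ?_
      rw [zero_add, pow_one, mul_comm]
      gcongr
  | succ q ih =>
    refine ⟨ih.2, fun hq => ?_⟩
    have i1 := ih.1 (by omega)
    have i2 := ih.2 (by omega)
    have hqp : (q : ℝ) + 2 ≤ p := by exact_mod_cast hq
    have hq0 : (0 : ℝ) ≤ q := Nat.cast_nonneg q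
    have hsw : 0 ≤ s * w := mul_nonneg hs0 hw0
    have hd0 : (0 : ℝ) ≤ d * L ^ q := by positivity
    calc mom A (q + 2) ≤ 4 * s * mom A (q + 1) +
          (2 * q + 3) * ((s ^ 2 + 2 * q * (4 * (s * w))) * mom A q) :=
          mom_rec A hA hs0 hw0 hs hw q
      _ ≤ 4 * s * (d * L ^ (q + 1)) +
          (2 * q + 3) * ((s ^ 2 + 2 * q * (4 * (s * w))) * (d * L ^ q)) := by gcongr
      _ ≤ 4 * s * (d * L ^ (q + 1)) +
          (2 * p) * ((s ^ 2 + 2 * p * (4 * (s * w))) * (d * L ^ q)) := by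
          gcongr <;> linarith
      _ = (4 * s * L + 2 * p * (s ^ 2 + 2 * p * (4 * (s * w)))) * (d * L ^ q) := by ring
      _ ≤ L ^ 2 * (d * L ^ q) := by gcongr
      _ = d * L ^ (q + 2) := by ring

lemma continuous_opNorm_sum (A : Fin n → Matrix (Fin d) (Fin d) ℝ) :
    Continuous fun g : Fin n → ℝ => opNorm (∑ i, g i • A i) := by
  have h : (fun g : Fin n → ℝ => opNorm (∑ i, g i • A i)) = fun g =>
      ‖∑ i, g i • LinearMap.toContinuousLinearMap (Matrix.toEuclideanLin (A i))‖ := by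
    funext g
    simp only [opNorm, map_sum, map_smul]
  rw [h]
  fun_prop

lemma integral_pow_le (hd : 0 < d) (A : Fin n → Matrix (Fin d) (Fin d) ℝ)
    (hA : ∀ i, (A i).IsSymm) (p : ℕ) (hp : 0 < p) :
    (∫ g, opNorm (∑ i, g i • A i) ∂(gaussianPi n)) ^ (2 * p) ≤ mom A p := by
  have hev : Even (2 * p) := even_two_mul p
  have hle : ∀ g : Fin n → ℝ, opNorm (∑ i, g i • A i) ^ (2 * p) ≤
      MvPolynomial.eval g (XM A ^ (2 * p)).trace := by
    intro g
    rw [eval_trace, map_pow, ev_XM]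
    exact opNorm_pow_le hd _ (XM_symm A hA g) _ hev
  have hintg2 : Integrable (fun g : Fin n → ℝ => opNorm (∑ i, g i • A i) ^ (2 * p))
      (gaussianPi n) := by
    refine (integrable_poly ((XM A ^ (2 * p)).trace)).mono'
      ((continuous_opNorm_sum A).pow _).aestronglyMeasurable ?_
    filter_upwards with g
    rw [Real.norm_eq_abs, abs_of_nonneg (hev.pow_nonneg _)]
    exact hle g
  have hmono : ∫ g, opNorm (∑ i, g i • A i) ^ (2 * p) ∂(gaussianPi n) ≤ mom A p :=
    integral_mono hintg2 (integrable_poly _) hle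
  refine le_trans ?_ hmono
  by_cases hintg : Integrable (fun g : Fin n → ℝ => opNorm (∑ i, g i • A i)) (gaussianPi n)
  · exact (hev.convexOn_pow (𝕜 := ℝ)).map_integral_le (μ := gaussianPi n)
      (continuous_pow _).continuousOn isClosed_univ
      (Filter.Eventually.of_forall fun _ => Set.mem_univ _) hintg hintg2
  · rw [integral_undef hintg, zero_pow (by omega)]
    exact integral_nonneg fun g => hev.pow_nonneg _

lemma final_numeric (σ v α τ e p L : ℝ) (hσ : 0 ≤ σ) (hv : 0 ≤ v) (hα : 0 ≤ α) (hτ : 0 ≤ τ)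
    (hτ2 : τ ^ 2 = v * σ) (hα4 : 1 / 2 ≤ α ^ 4) (he : e ≤ 3) (hp0 : 0 ≤ p)
    (hp : p ≤ 3 * α ^ 4)
    (hL : L = 4 * σ ^ 2 + √(2 * p * ((σ ^ 2) ^ 2 + 2 * p * (4 * (σ ^ 2 * v ^ 2))))) :
    e * L ≤ (6 * (α * σ + α ^ 2 * τ)) ^ 2 := by
  have hL0 : 0 ≤ L := by rw [hL]; positivity
  have hR : √(2 * p * ((σ ^ 2) ^ 2 + 2 * p * (4 * (σ ^ 2 * v ^ 2)))) ≤
      3 * α ^ 2 * σ ^ 2 + 12 * α ^ 4 * τ ^ 2 := by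
    refine Real.sqrt_le_iff.2 ⟨by positivity, ?_⟩
    have h1 : 2 * p * (σ ^ 2) ^ 2 ≤ (3 * α ^ 2 * σ ^ 2) ^ 2 := by
      have := mul_le_mul_of_nonneg_right hp (by positivity : 0 ≤ 2 * (σ ^ 2) ^ 2)
      have h0 : 0 ≤ α ^ 4 * (σ ^ 2) ^ 2 := by positivity
      nlinarith
    have h2 : 16 * p ^ 2 * (σ ^ 2 * v ^ 2) ≤ (12 * α ^ 4 * τ ^ 2) ^ 2 := by
      have hpp : p ^ 2 ≤ (3 * α ^ 4) ^ 2 := pow_le_pow_left₀ hp0 hp 2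
      have := mul_le_mul_of_nonneg_right hpp (by positivity : 0 ≤ 16 * (σ ^ 2 * v ^ 2))
      rw [hτ2]
      refine le_trans (le_of_eq (by ring)) (this.trans (le_of_eq (by ring)))
    have h3 : 0 ≤ (3 * α ^ 2 * σ ^ 2) * (12 * α ^ 4 * τ ^ 2) := by positivity
    nlinarith
  have hα2 : 2 / 3 ≤ α ^ 2 := by
    by_contra hc
    push Not at hc
    have : α ^ 4 < 1 / 2 := by
      have h0 : 0 ≤ α ^ 2 := by positivity
      nlinarith
    linarith
  have hLb : L ≤ 9 * α ^ 2 * σ ^ 2 + 12 * α ^ 4 * τ ^ 2 := by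
    have := mul_le_mul_of_nonneg_right hα2 (by positivity : 0 ≤ σ ^ 2)
    rw [hL]
    linarith
  have h1 : e * L ≤ 3 * (9 * α ^ 2 * σ ^ 2 + 12 * α ^ 4 * τ ^ 2) :=
    (mul_le_mul_of_nonneg_right he hL0).trans (by linarith)
  have h2 : 0 ≤ α * σ * (α ^ 2 * τ) := by positivity
  have h3 : 0 ≤ α ^ 2 * σ ^ 2 := by positivity
  nlinarith

end TroppAux

/-- **Tropp-type matrix concentration bound (footnote of Section 1.1).** There is a
universal constant `C > 0` such that for all positive integers `n` and `d ≥ 2` and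
symmetric matrices `A 1, …, A n ∈ ℝ^{d×d}`, the Gaussian random matrix
`X = ∑ g i • A i` satisfies
`𝔼[‖X‖_op] ≤ C ((log d)^{1/4} σ(X) + (log d)^{1/2} √(v(X) σ(X)))`. -/
theorem tropp_bbvh_matrix_concentration :
    ∃ C : ℝ, 0 < C ∧ ∀ (n d : ℕ), 0 < n → 2 ≤ d →
      ∀ A : Fin n → Matrix (Fin d) (Fin d) ℝ, (∀ i, (A i).IsSymm) →
        (∫ g, opNorm (∑ i, g i • A i) ∂(gaussianPi n)) ≤
          C * ((Real.log d) ^ ((1 : ℝ) / 4) * sigmaX A +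
            (Real.log d) ^ ((1 : ℝ) / 2) * Real.sqrt (vX A * sigmaX A)) := by
  refine ⟨6, by norm_num, ?_⟩
  intro n d _ hd A hA
  set σ := sigmaX A with hσ
  set v := vX A with hv
  have hσ0 : 0 ≤ σ := Real.sqrt_nonneg _
  have hv0 : 0 ≤ v := Real.sqrt_nonneg _
  have hd0 : (2 : ℝ) ≤ d := by exact_mod_cast hd
  set ell := Real.log d with hell
  have hl : 1 / 2 ≤ ell := by
    have h1 := Real.log_two_gt_d9
    have h2 : Real.log 2 ≤ ell := Real.log_le_log (by norm_num) hd0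
    linarith
  have hl0 : 0 ≤ ell := by linarith
  set α := ell ^ ((1 : ℝ) / 4) with hα
  have hα0 : 0 ≤ α := Real.rpow_nonneg hl0 _
  have hα4 : α ^ 4 = ell := by
    rw [hα, ← Real.rpow_natCast, ← Real.rpow_mul hl0]
    norm_num
  have hα2 : ell ^ ((1 : ℝ) / 2) = α ^ 2 := by
    rw [hα, ← Real.rpow_natCast, ← Real.rpow_mul hl0]
    norm_num
  set p := ⌈ell⌉₊ with hp
  have hp1 : ell ≤ p := Nat.le_ceil _
  have hp2 : (p : ℝ) < ell + 1 := Nat.ceil_lt_add_one hl0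
  have hp0 : 0 < p := Nat.ceil_pos.2 (by linarith)
  set L := 4 * σ ^ 2 + √(2 * p * ((σ ^ 2) ^ 2 + 2 * p * (4 * (σ ^ 2 * v ^ 2)))) with hL
  have hL0 : 0 ≤ L := by positivity
  have hnum := TroppAux.final_numeric σ v α (√(v * σ)) (Real.exp 1) p L hσ0 hv0 hα0
    (Real.sqrt_nonneg _) (Real.sq_sqrt (mul_nonneg hv0 hσ0)) (by rw [hα4]; exact hl)
    (by linarith [Real.exp_one_lt_d9]) (Nat.cast_nonneg p) (by rw [hα4]; linarith) hL
  have hmom := (TroppAux.mom_bound A hA (sq_nonneg σ) (sq_nonneg v) (TroppAux.HS_sigma A hA)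
    (TroppAux.HW_v A) p L hL0 (by
      rw [hL]
      have := Real.sqrt_nonneg (2 * p * ((σ ^ 2) ^ 2 + 2 * p * (4 * (σ ^ 2 * v ^ 2))))
      nlinarith [sq_nonneg σ]) (by
      have h0 : 0 ≤ 2 * p * ((σ ^ 2) ^ 2 + 2 * p * (4 * (σ ^ 2 * v ^ 2))) := by positivity
      have h1 := Real.sq_sqrt h0
      have h2 := Real.sqrt_nonneg (2 * p * ((σ ^ 2) ^ 2 + 2 * p * (4 * (σ ^ 2 * v ^ 2))))
      have h3 := mul_nonneg (sq_nonneg σ) h2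
      rw [hL]
      nlinarith) p).1 le_rfl
  have hintg := TroppAux.integral_pow_le (by omega) A hA p hp0
  rw [hα2]
  refine le_of_sq_le_sq ?_ (by positivity)
  refine le_trans ?_ hnum
  refine (pow_le_pow_iff_left₀ (by positivity) (by positivity) hp0.ne').1 ?_
  rw [← pow_mul]
  refine (hintg.trans hmom).trans ?_
  rw [mul_pow]
  refine mul_le_mul_of_nonneg_right ?_ (by positivity)
  rw [← Real.exp_nat_mul, mul_one]
  calc (d : ℝ) = Real.exp ell := (Real.exp_log (by linarith)).symm
    _ ≤ Real.exp p := Real.exp_le_exp.2 hp1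
end
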